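/- arXiv:2201.00847 — 2 statements merged into one kernel-verified Lean document; each statement's English description precedes it below -/
import Mathlib

section
/- Let M be a stable R-module with G_C-dim_R(M) = 0 and λM ∈ A_C. Then M is horizontally linked, λM is a stable R-module, and G_C-dim_R(λM ⊗_R C) = 0. -/
open CategoryTheory TensorProduct

noncomputable section

universe u

variable (R : Type u) [CommRing R]

/-- The `i`-th Ext module `Ext_R^i(M, N)`. -/
def ExtM (M N : ModuleCat.{u} R) (i : ℕ) : ModuleCat.{u} R :=
  ((Ext R (ModuleCat.{u} R) i).obj (Opposite.op M)).obj N

/-- The `i`-th Tor module `Tor_i^R(M, N)`. -/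
def TorM (M N : ModuleCat.{u} R) (i : ℕ) : ModuleCat.{u} R :=
  ((Tor (ModuleCat.{u} R) i).obj M).obj N

/-- The biduality (evaluation) map `M → Hom_R(Hom_R(M, C), C)`. -/
def bidualityMap (C M : ModuleCat.{u} R) :
    ↥M →ₗ[R] ((↥M →ₗ[R] ↥C) →ₗ[R] ↥C) :=
  (LinearMap.id : (↥M →ₗ[R] ↥C) →ₗ[R] (↥M →ₗ[R] ↥C)).flip

/-- `C` is a semidualizing `R`-module. -/
def IsSemidualizing (C : ModuleCat.{u} R) : Prop :=
  Module.Finite R ↥C ∧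
  Function.Bijective (fun r : R => (r • LinearMap.id : ↥C →ₗ[R] ↥C)) ∧
  ∀ i : ℕ, 0 < i → Subsingleton (ExtM R C C i)

/-- `M` is totally `C`-reflexive. -/
def IsTotallyCReflexive (C M : ModuleCat.{u} R) : Prop :=
  Module.Finite R ↥M ∧
  Function.Bijective (bidualityMap R C M) ∧
  (∀ i : ℕ, 0 < i → Subsingleton (ExtM R M C i)) ∧
  (∀ i : ℕ, 0 < i → Subsingleton (ExtM R (ModuleCat.of R (↥M →ₗ[R] ↥C)) C i))

/-- `G_C`-dimension of `M` is at most `n`: there is an exact sequence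
`0 → X_n → ⋯ → X_0 → M → 0` with each `X_i` totally `C`-reflexive. -/
def gcdimLE (C : ModuleCat.{u} R) : ℕ → ModuleCat.{u} R → Prop
  | 0, M => IsTotallyCReflexive R C M
  | n+1, M => ∃ (X K : ModuleCat.{u} R) (f : ↥K →ₗ[R] ↥X) (g : ↥X →ₗ[R] ↥M),
      Function.Injective f ∧ Function.Surjective g ∧
      LinearMap.ker g = LinearMap.range f ∧
      IsTotallyCReflexive R C X ∧ gcdimLE C n K

/-- The `G_C`-dimension of `M`, as an element of `ℕ∞`. -/
def gcdim (C M : ModuleCat.{u} R) : ℕ∞ :=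
  sInf ((fun n : ℕ => (n : ℕ∞)) '' {n | gcdimLE R C n M})

/-- `grade_R(M) = inf { i | Ext_R^i(M, R) ≠ 0 }`, with `grade 0 = ∞`. -/
def gradeR (M : ModuleCat.{u} R) : ℕ∞ :=
  sInf ((fun i : ℕ => (i : ℕ∞)) ''
    {i | ¬ Subsingleton (ExtM R M (ModuleCat.of R R) i)})

/-- Reduced grade of `M` with respect to `C`. -/
def rgrade (C M : ModuleCat.{u} R) : ℕ∞ :=
  sInf ((fun i : ℕ => (i : ℕ∞)) ''
    {i | 0 < i ∧ ¬ Subsingleton (ExtM R M C i)})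

/-- `M` is reduced `G_C`-perfect. -/
def IsReducedGCPerfect (C M : ModuleCat.{u} R) : Prop :=
  gcdim R C M ≠ ⊤ ∧ rgrade R C M = gcdim R C M

/-- `M` is `G_C`-perfect. -/
def IsGCPerfect (C M : ModuleCat.{u} R) : Prop :=
  gcdim R C M ≠ ⊤ ∧ gradeR R M = gcdim R C M

/-- `π : P → M` is a projective cover: `P` projective, `π` surjective with superfluous kernel. -/
def IsProjectiveCover {P M : ModuleCat.{u} R} (π : ↥P →ₗ[R] ↥M) : Prop :=
  Module.Projective R ↥P ∧ Function.Surjective π ∧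
  ∀ N : Submodule R ↥P, N ⊔ LinearMap.ker π = ⊤ → N = ⊤

/-- `P₁ →d P₀ →π M → 0` is a minimal projective presentation of `M`. -/
def IsMinimalPresentation {P1 P0 M : ModuleCat.{u} R}
    (d : ↥P1 →ₗ[R] ↥P0) (π : ↥P0 →ₗ[R] ↥M) : Prop :=
  Module.Finite R ↥P1 ∧ Module.Finite R ↥P0 ∧
  IsProjectiveCover R π ∧
  LinearMap.range d = LinearMap.ker π ∧
  Module.Projective R ↥P1 ∧
  ∀ N : Submodule R ↥P1, N ⊔ LinearMap.ker d = ⊤ → N = ⊤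

/-- `T` is (a module isomorphic to) the transpose `Tr_C(M)` of `M` with respect to `C`,
computed from a minimal projective presentation of `M`. -/
def IsTransposeC (C M T : ModuleCat.{u} R) : Prop :=
  ∃ (P1 P0 : ModuleCat.{u} R) (d : ↥P1 →ₗ[R] ↥P0) (π : ↥P0 →ₗ[R] ↥M),
    IsMinimalPresentation R d π ∧
    Nonempty (↥T ≃ₗ[R]
      ((↥P1 →ₗ[R] ↥C) ⧸ LinearMap.range (LinearMap.lcomp R ↥C d)))

/-- `T` is the usual Auslander transpose `Tr(M) = Tr_R(M)`. -/
def IsTranspose (M T : ModuleCat.{u} R) : Prop :=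
  IsTransposeC R (ModuleCat.of R R) M T

/-- `S` is (a module isomorphic to) the first syzygy `Ω N`, i.e. the kernel of a
projective cover of `N`. -/
def IsSyzygyOf (N S : ModuleCat.{u} R) : Prop :=
  ∃ (P : ModuleCat.{u} R) (π : ↥P →ₗ[R] ↥N),
    Module.Finite R ↥P ∧ IsProjectiveCover R π ∧
    Nonempty (↥S ≃ₗ[R] LinearMap.ker π)

/-- `S` is (a module isomorphic to) the `n`-th syzygy `Ωⁿ M`. -/
def IsNthSyzygy : ℕ → ModuleCat.{u} R → ModuleCat.{u} R → Prop
  | 0, M, S => Nonempty (↥S ≃ₗ[R] ↥M)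
  | n+1, M, S => ∃ K : ModuleCat.{u} R, IsNthSyzygy n M K ∧ IsSyzygyOf R K S

/-- `L` is (a module isomorphic to) `λ M = Ω Tr M`. -/
def IsLambda (M L : ModuleCat.{u} R) : Prop :=
  ∃ T : ModuleCat.{u} R, IsTranspose R M T ∧ IsSyzygyOf R T L

/-- `M` is horizontally linked, i.e. `M ≅ λλM`. -/
def IsHorizontallyLinked (M : ModuleCat.{u} R) : Prop :=
  ∃ L L2 : ModuleCat.{u} R, IsLambda R M L ∧ IsLambda R L L2 ∧
    Nonempty (↥M ≃ₗ[R] ↥L2)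

/-- `M` is stable: it has no non-zero projective direct summand. -/
def IsStable (M : ModuleCat.{u} R) : Prop :=
  ∀ (P N : ModuleCat.{u} R), Module.Projective R ↥P →
    Nonempty (↥M ≃ₗ[R] (↥P × ↥N)) → Subsingleton ↥P

/-- `N` belongs to the Auslander class `A_C`. -/
def MemAuslanderClass (C N : ModuleCat.{u} R) : Prop :=
  Function.Bijective (TensorProduct.mk R ↥N ↥C) ∧
  (∀ i : ℕ, 0 < i → Subsingleton (TorM R C N i)) ∧
  (∀ i : ℕ, 0 < i → Subsingleton
    (ExtM R C (ModuleCat.of R (↥N ⊗[R] ↥C)) i))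

/-- `R` is semiperfect: every finite `R`-module has a projective cover. -/
def IsSemiperfectRing : Prop :=
  ∀ M : ModuleCat.{u} R, Module.Finite R ↥M →
    ∃ (P : ModuleCat.{u} R) (π : ↥P →ₗ[R] ↥M),
      Module.Finite R ↥P ∧ IsProjectiveCover R π

/-- Depth over a local ring, via Ext from the residue field. -/
def rdepth [IsLocalRing R] (M : ModuleCat.{u} R) : ℕ∞ :=
  sInf ((fun i : ℕ => (i : ℕ∞)) ''
    {i | ¬ Subsingleton
      (ExtM R (ModuleCat.of R (IsLocalRing.ResidueField R)) M i)})

/-- Projective dimension at most `n`. -/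
def pdimLE : ℕ → ModuleCat.{u} R → Prop
  | 0, M => Module.Projective R ↥M
  | n+1, M => ∃ (X K : ModuleCat.{u} R) (f : ↥K →ₗ[R] ↥X) (g : ↥X →ₗ[R] ↥M),
      Function.Injective f ∧ Function.Surjective g ∧
      LinearMap.ker g = LinearMap.range f ∧
      Module.Projective R ↥X ∧ pdimLE n K

/-- Projective dimension, as an element of `ℕ∞`. -/
def pdim (M : ModuleCat.{u} R) : ℕ∞ :=
  sInf ((fun n : ℕ => (n : ℕ∞)) '' {n | pdimLE R n M})

/-- `M` is `C`-`k`-torsionless. -/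
def IsCkTorsionless (C M : ModuleCat.{u} R) (k : ℕ) : Prop :=
  k = 0 ∨ ∀ T : ModuleCat.{u} R, IsTransposeC R C M T →
    ∀ i : ℕ, 1 ≤ i → i ≤ k → Subsingleton (ExtM R T C i)

/-- `M` is a `C`-syzygy: it embeds into `P ⊗_R C` with `P` finite projective. -/
def IsCSyzygy (C M : ModuleCat.{u} R) : Prop :=
  ∃ (P : ModuleCat.{u} R), Module.Finite R ↥P ∧ Module.Projective R ↥P ∧
    ∃ f : ↥M →ₗ[R] (↥P ⊗[R] ↥C), Function.Injective f


/-- There is an exact sequence `0 → N → X_k → ⋯ → X_1 → M → 0` of finite `R`-modules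
with `Ext_R^i(X_j, C) = 0` for all `i > 0` and all `j`. -/
def ExtVanishingChain (C : ModuleCat.{u} R) : ℕ → ModuleCat.{u} R → ModuleCat.{u} R → Prop
  | 0, N, M => Nonempty (↥N ≃ₗ[R] ↥M)
  | k+1, N, M => ∃ (X K : ModuleCat.{u} R) (f : ↥K →ₗ[R] ↥X) (g : ↥X →ₗ[R] ↥M),
      Function.Injective f ∧ Function.Surjective g ∧
      LinearMap.ker g = LinearMap.range f ∧
      Module.Finite R ↥X ∧ (∀ i : ℕ, 0 < i → Subsingleton (ExtM R X C i)) ∧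
      ExtVanishingChain C k N K


/-! ### Part 1: comparison of the two definitions of Ext -/

theorem extM_subsingleton_iff (X Y : ModuleCat.{u} R) (n : ℕ) :
    Subsingleton (ExtM R X Y (n + 1)) ↔ Subsingleton (Abelian.Ext.{u} X Y (n + 1)) := by
  let P := projectiveResolution X
  have h1 : Subsingleton (ExtM R X Y (n + 1)) ↔
      ∀ f : P.complex.X (n + 1) ⟶ Y, P.complex.d (n + 2) (n + 1) ≫ f = 0 →
        ∃ g : P.complex.X n ⟶ Y, P.complex.d (n + 1) n ≫ g = f := by
    rw [ModuleCat.isZero_iff_subsingleton.symm]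
    unfold ExtM
    rw [(P.isoExt (R := R) (n + 1) Y).isZero_iff, ← HomologicalComplex.exactAt_iff_isZero_homology,
      HomologicalComplex.exactAt_iff' _ n (n + 1) (n + 2) (by simp) (by simp),
      ShortComplex.moduleCat_exact_iff]
    rfl
  rw [h1]
  constructor
  · intro h
    refine ⟨fun a b => ?_⟩
    have key : ∀ a : Abelian.Ext.{u} X Y (n + 1), a = 0 := by
      intro a
      obtain ⟨f, hf, rfl⟩ := P.extMk_surjective a (n + 2) rfl
      rw [P.extMk_eq_zero_iff f (n + 2) rfl hf n rfl]
      exact h f hf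
    rw [key a, key b]
  · intro h f hf
    rw [← P.extMk_eq_zero_iff f (n + 2) rfl hf n rfl]
    exact Subsingleton.elim _ _

/-- vanishing of all positive Ext into `C`. -/
def ExtVan (X C : ModuleCat.{u} R) : Prop :=
  ∀ n : ℕ, 0 < n → ∀ x : Abelian.Ext.{u} X C n, x = 0

theorem extVan_iff (X C : ModuleCat.{u} R) :
    (∀ i : ℕ, 0 < i → Subsingleton (ExtM R X C i)) ↔ ExtVan R X C := by
  constructor
  · intro h n hn x
    obtain ⟨n, rfl⟩ : ∃ m, n = m + 1 := ⟨n - 1, by omega⟩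
    have := (extM_subsingleton_iff R X C n).1 (h _ hn)
    exact Subsingleton.elim _ _
  · intro h n hn
    obtain ⟨n, rfl⟩ : ∃ m, n = m + 1 := ⟨n - 1, by omega⟩
    exact (extM_subsingleton_iff R X C n).2 ⟨fun a b => by rw [h _ hn a, h _ hn b]⟩

section seq
variable {R}
variable {A B X C : ModuleCat.{u} R} (f : ↥A →ₗ[R] ↥B) (g : ↥B →ₗ[R] ↥X)

/-- the short complex. -/
def scOf (hfg : Function.Exact f g) : ShortComplex (ModuleCat.{u} R) :=
  ShortComplex.mk (ModuleCat.ofHom f) (ModuleCat.ofHom g) (by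
    ext x; exact hfg.apply_apply_eq_zero x)

theorem scOf_shortExact (hf : Function.Injective f) (hfg : Function.Exact f g)
    (hg : Function.Surjective g) : (scOf f g hfg).ShortExact where
  exact := by
    rw [ShortComplex.moduleCat_exact_iff]
    intro x hx
    exact (hfg x).1 hx
  mono_f := (ModuleCat.mono_iff_injective _).2 hf
  epi_g := (ModuleCat.epi_iff_surjective _).2 hg

/-- (e) -/
theorem lcomp_surj_of_ext (hf : Function.Injective f) (hfg : Function.Exact f g)
    (hg : Function.Surjective g) (hX : ExtVan R X C) :
    Function.Surjective (fun φ : ↥B →ₗ[R] ↥C => φ ∘ₗ f) := by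
  intro ψ
  obtain ⟨x2, h2⟩ := Abelian.Ext.contravariant_sequence_exact₁ (scOf_shortExact f g hf hfg hg)
    (Y := C) (Abelian.Ext.mk₀ (ModuleCat.ofHom ψ)) (n₁ := 1) rfl (hX 1 one_pos _)
  obtain ⟨φ, rfl⟩ := (Abelian.Ext.mk₀_bijective _ _).2 x2
  rw [Abelian.Ext.mk₀_comp_mk₀] at h2
  have := (Abelian.Ext.mk₀_bijective _ _).1 h2
  refine ⟨φ.hom, ?_⟩
  have h3 := congrArg ModuleCat.Hom.hom this
  exact h3

/-- (d) -/
theorem extVan_ker (hf : Function.Injective f) (hfg : Function.Exact f g)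
    (hg : Function.Surjective g) (hB : ExtVan R B C) (hX : ExtVan R X C) : ExtVan R A C := by
  intro n hn x
  obtain ⟨y, hy⟩ := Abelian.Ext.contravariant_sequence_exact₁ (scOf_shortExact f g hf hfg hg)
    (Y := C) x (n₁ := 1 + n) rfl (hX _ (by omega) _)
  have : y = 0 := hB n hn y
  rw [← hy, this]
  exact Abelian.Ext.comp_zero ..

/-- (c) -/
theorem extVan_coker (hf : Function.Injective f) (hfg : Function.Exact f g)
    (hg : Function.Surjective g) (hA : ExtVan R A C) (hB : ExtVan R B C)
    (hs : Function.Surjective (fun φ : ↥B →ₗ[R] ↥C => φ ∘ₗ f)) : ExtVan R X C := by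
  intro n hn x
  have hS := scOf_shortExact f g hf hfg hg
  obtain ⟨n, rfl⟩ : ∃ m, n = 1 + m := ⟨n - 1, by omega⟩
  obtain ⟨y, hy⟩ := Abelian.Ext.contravariant_sequence_exact₃ hS
    (Y := C) x (hB _ (by omega) _) (n₀ := n) rfl
  rcases Nat.eq_zero_or_pos n with rfl | hn
  · obtain ⟨ψ, rfl⟩ := (Abelian.Ext.mk₀_bijective _ _).2 y
    obtain ⟨φ, hφ⟩ := hs ψ.hom
    obtain ⟨χ, rfl⟩ : ∃ χ : (scOf f g hfg).X₂ ⟶ C, ψ = (scOf f g hfg).f ≫ χ := by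
      refine ⟨ModuleCat.ofHom φ, ?_⟩
      ext z; exact (LinearMap.congr_fun hφ z).symm
    rw [← hy, ← Abelian.Ext.mk₀_comp_mk₀]
    exact hS.extClass_comp_assoc _
  · have : y = 0 := hA n hn y
    rw [← hy, this]
    exact Abelian.Ext.comp_zero ..

theorem extVan_of_sum {n : ℕ} (a : Fin n → (↥X →ₗ[R] ↥B)) (b : Fin n → (↥B →ₗ[R] ↥X))
    (hab : ∀ x, ∑ i, b i (a i x) = x) (hB : ExtVan R B C) : ExtVan R X C := by
  intro m hm x
  have h1 : 𝟙 X = ∑ i, ModuleCat.ofHom (a i) ≫ ModuleCat.ofHom (b i) := by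
    ext x
    simp [ModuleCat.hom_sum, hab]
  rw [← Abelian.Ext.mk₀_id_comp x, h1, Abelian.Ext.mk₀_sum, Abelian.Ext.sum_comp]
  apply Finset.sum_eq_zero
  intro i _
  rw [← Abelian.Ext.mk₀_comp_mk₀_assoc, hB m hm ((Abelian.Ext.mk₀ _).comp x _)]
  exact Abelian.Ext.comp_zero ..

theorem extVan_of_equiv (e : ↥X ≃ₗ[R] ↥B) (hB : ExtVan R B C) : ExtVan R X C :=
  extVan_of_sum (n := 1) (fun _ => e.toLinearMap) (fun _ => e.symm.toLinearMap) (by simp) hB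

theorem extVan_of_projective (h : Module.Projective R ↥X) : ExtVan R X C := by
  intro n hn x
  have : Projective X := (IsProjective.iff_projective X).1 h
  obtain ⟨n, rfl⟩ : ∃ m, n = m + 1 := ⟨n - 1, by omega⟩
  exact Abelian.Ext.eq_zero_of_projective x
end seq

/-! ### Part 2: projective covers -/

section covers
variable {R}
variable {P P' Q T M N L : Type u} [AddCommGroup P] [Module R P] [AddCommGroup P'] [Module R P']
  [AddCommGroup Q] [Module R Q] [AddCommGroup T] [Module R T] [AddCommGroup M] [Module R M]
  [AddCommGroup N] [Module R N] [AddCommGroup L] [Module R L]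

/-- superfluous submodule -/
def Superfl (K : Submodule R P) : Prop := ∀ N : Submodule R P, N ⊔ K = ⊤ → N = ⊤

theorem Superfl.le_jacobson {K : Submodule R P} (hK : Superfl K) (f : P →ₗ[R] R) {x : P}
    (hx : x ∈ K) : f x ∈ Ideal.jacobson (⊥ : Ideal R) := by
  rw [Ideal.jacobson, Ideal.mem_sInf]
  rintro I ⟨-, hI⟩
  by_contra hn
  have h1 : Submodule.comap f I ⊔ K = ⊤ := by
    have h2 : I ⊔ Ideal.span {f x} = ⊤ := by
      refine hI.1.2 _ (lt_of_le_of_ne le_sup_left fun he => hn ?_)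
      rw [he]
      exact Submodule.mem_sup_right (Ideal.mem_span_singleton_self _)
    rw [eq_top_iff]
    rintro p -
    have h3 : f p ∈ I ⊔ Ideal.span {f x} := h2 ▸ Submodule.mem_top
    obtain ⟨i, hi, j, hj, hij⟩ := Submodule.mem_sup.1 h3
    obtain ⟨r, rfl⟩ := Ideal.mem_span_singleton'.1 hj
    refine Submodule.mem_sup.2 ⟨p - r • x, ?_, r • x, K.smul_mem r hx, by abel⟩
    rw [Submodule.mem_comap, map_sub, map_smul, ← hij]
    simpa using hi
  have h4 := hK _ h1
  have : x ∈ Submodule.comap f I := h4 ▸ Submodule.mem_top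
  exact hn this

/-- the range of the dual of a map with superfluous range is superfluous. -/
theorem superfl_range_dual [Module.Finite R P'] [Module.Projective R P']
    (d : P' →ₗ[R] P) (hd : Superfl (LinearMap.range d)) :
    Superfl (LinearMap.range (LinearMap.lcomp R R d)) := by
  have hle : LinearMap.range (LinearMap.lcomp R R d) ≤
      Ideal.jacobson (⊥ : Ideal R) • (⊤ : Submodule R (P' →ₗ[R] R)) := by
    rintro _ ⟨f, rfl⟩
    obtain ⟨n, a, b, -, -, hab⟩ := Module.Finite.exists_comp_eq_id_of_projective R P'
    have h1 : LinearMap.lcomp R R d f =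
        ∑ i, f (d (a (Pi.single i 1))) • (LinearMap.proj i ∘ₗ b) := by
      ext p
      have h2 : a (b p) = p := LinearMap.congr_fun hab p
      have h3 : b p = ∑ i, b p i • (Pi.single i (1 : R) : Fin n → R) := by
        ext j; simp [Finset.sum_apply, Pi.single_apply]
      conv_lhs => rw [LinearMap.lcomp_apply, ← h2, h3]
      simp [mul_comm]
    rw [h1]
    refine Submodule.sum_mem _ fun i _ => ?_
    exact Submodule.smul_mem_smul (hd.le_jacobson f ⟨_, rfl⟩) trivial
  intro N hN
  have h5 : (⊤ : Submodule R (P' →ₗ[R] R)) ≤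
      N ⊔ Ideal.jacobson (⊥ : Ideal R) • (⊤ : Submodule R (P' →ₗ[R] R)) := by
    exact hN.symm.le.trans (sup_le_sup_left hle N)
  have hfin : (⊤ : Submodule R (P' →ₗ[R] R)).FG := Module.Finite.fg_top
  exact eq_top_iff.2 (Submodule.le_of_le_smul_of_le_jacobson_bot hfin le_rfl h5)

/-- uniqueness of kernel of projective covers -/
theorem cover_unique [Module.Projective R P] [Module.Projective R P'] (π : P →ₗ[R] T)
    (π' : P' →ₗ[R] T) (hπ : Function.Surjective π) (hπ' : Function.Surjective π')
    (h : Superfl (LinearMap.ker π)) (h' : Superfl (LinearMap.ker π')) :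
    Nonempty (LinearMap.ker π ≃ₗ[R] LinearMap.ker π') := by
  obtain ⟨s, hs⟩ := Module.projective_lifting_property π' π hπ'
  have hs' : ∀ x, π' (s x) = π x := fun x => LinearMap.congr_fun hs x
  have hsurj : Function.Surjective s := by
    rw [← LinearMap.range_eq_top]
    apply h'
    rw [eq_top_iff]
    rintro x -
    obtain ⟨y, hy⟩ := hπ (π' x)
    refine Submodule.mem_sup.2 ⟨s y, ⟨y, rfl⟩, x - s y, ?_, by abel⟩
    rw [LinearMap.mem_ker, map_sub, hs', hy, sub_self]
  obtain ⟨t, ht⟩ := Module.projective_lifting_property s LinearMap.id hsurj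
  have ht' : ∀ x, s (t x) = x := fun x => LinearMap.congr_fun ht x
  have htsurj : Function.Surjective t := by
    rw [← LinearMap.range_eq_top]
    apply h
    rw [eq_top_iff]
    rintro x -
    refine Submodule.mem_sup.2 ⟨t (s x), ⟨_, rfl⟩, x - t (s x), ?_, by abel⟩
    rw [LinearMap.mem_ker, map_sub, ← hs', ← hs', ht', sub_self]
  have hinj : Function.Injective s := by
    intro x y hxy
    obtain ⟨x, rfl⟩ := htsurj x
    obtain ⟨y, rfl⟩ := htsurj y
    rw [ht', ht'] at hxy
    rw [hxy]
  let e := LinearEquiv.ofBijective s ⟨hinj, hsurj⟩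
  refine ⟨e.ofSubmodules _ _ ?_⟩
  ext y
  constructor
  · rintro ⟨x, hx, rfl⟩
    change π' (s x) = 0
    rw [hs']; exact hx
  · intro hy
    obtain ⟨x, rfl⟩ := hsurj y
    exact ⟨x, by change π x = 0; rw [← hs']; exact hy, rfl⟩

theorem proj_eq_zero [Module.Projective R P] (p : P) (h : ∀ f : P →ₗ[R] R, f p = 0) : p = 0 := by
  obtain ⟨s, hs⟩ := Module.projective_def'.1 (inferInstance : Module.Projective R P)
  have h1 : s p = 0 := by
    ext i
    exact h (Finsupp.lapply i ∘ₗ s)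
  have h2 := LinearMap.congr_fun hs p
  simp [h1] at h2
  exact h2.symm

theorem proj_eval_surj [Module.Finite R P] [Module.Projective R P] (α : (P →ₗ[R] R) →ₗ[R] R) :
    ∃ p : P, ∀ f : P →ₗ[R] R, α f = f p := by
  obtain ⟨p, hp⟩ := (Module.bijective_dual_eval R P).2 α
  exact ⟨p, fun f => by rw [← hp]; rfl⟩

theorem lift_inj (i : M →ₗ[R] N) (hi : Function.Injective i) (g : Q →ₗ[R] N)
    (h : ∀ q, ∃ m, g q = i m) : ∃ k : Q →ₗ[R] M, ∀ q, i (k q) = g q := by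
  let g' : Q →ₗ[R] LinearMap.range i := LinearMap.codRestrict _ g (fun q => by
    obtain ⟨m, hm⟩ := h q
    exact ⟨m, hm.symm⟩)
  refine ⟨(LinearEquiv.ofInjective i hi).symm.toLinearMap ∘ₗ g', fun q => ?_⟩
  have := (LinearEquiv.ofInjective i hi).apply_symm_apply (g' q)
  exact congrArg Subtype.val this

theorem factor_surj (g : M →ₗ[R] N) (hg : Function.Surjective g) (φ : M →ₗ[R] Q)
    (h : ∀ b, g b = 0 → φ b = 0) : ∃ ψ : N →ₗ[R] Q, ∀ b, ψ (g b) = φ b := by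
  refine ⟨(LinearMap.ker g).liftQ φ (fun b hb => h b hb) ∘ₗ
    (g.quotKerEquivOfSurjective hg).symm.toLinearMap, fun b => ?_⟩
  change ((LinearMap.ker g).liftQ φ (fun b hb => h b hb))
    ((g.quotKerEquivOfSurjective hg).symm (g b)) = φ b
  have : (g.quotKerEquivOfSurjective hg).symm (g b) = (LinearMap.ker g).mkQ b := by
    rw [LinearEquiv.symm_apply_eq]; rfl
  rw [this]; rfl

theorem stable_surj (hst : IsStable R (ModuleCat.of R M)) [Module.Projective R P]
    (g : M →ₗ[R] P) (hg : Function.Surjective g) : Subsingleton P := by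
  obtain ⟨t, ht⟩ := Module.projective_lifting_property g LinearMap.id hg
  have ht' : ∀ x, g (t x) = x := fun x => LinearMap.congr_fun ht x
  refine hst (ModuleCat.of R P) (ModuleCat.of R (LinearMap.ker g)) ‹_› ⟨?_⟩
  exact
    { toFun := fun m => (g m, ⟨m - t (g m), by rw [LinearMap.mem_ker, map_sub, ht', sub_self]⟩)
      invFun := fun x => t x.1 + (x.2 : M)
      map_add' := by
        intro x y
        refine Prod.ext (map_add g x y) (Subtype.ext ?_)
        change x + y - t (g (x + y)) = (x - t (g x)) + (y - t (g y))
        rw [map_add, map_add]; abel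
      map_smul' := by
        intro a x
        refine Prod.ext (map_smul g a x) (Subtype.ext ?_)
        change a • x - t (g (a • x)) = a • (x - t (g x))
        rw [map_smul, map_smul, smul_sub]
      left_inv := by
        intro x
        change t (g x) + (x - t (g x)) = x
        abel
      right_inv := by
        rintro ⟨x, y, hy⟩
        have hy' : g y = 0 := hy
        have h1 : g (t x + y) = x := by rw [map_add, ht', hy', add_zero]
        refine Prod.ext h1 (Subtype.ext ?_)
        change t x + y - t (g (t x + y)) = y
        rw [h1]; abel }

/-- if `M` is stable then `P0* → im (P0* → P1*)` has superfluous kernel. -/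
theorem superfl_ker_of_stable [Module.Finite R P] [Module.Projective R P]
    (π : P →ₗ[R] M) (hπ : Function.Surjective π)
    (hst : IsStable R (ModuleCat.of R M))
    (ρ : (P →ₗ[R] R) →ₗ[R] L) (hρ : Function.Surjective ρ)
    (hker : ∀ f, ρ f = 0 ↔ ∃ h : M →ₗ[R] R, f = h ∘ₗ π)
    [Module.Projective R Q] (c : Q →ₗ[R] L) (hc : Function.Surjective c)
    (hcs : Superfl (LinearMap.ker c)) : Superfl (LinearMap.ker ρ) := by
  obtain ⟨s, hs⟩ := Module.projective_lifting_property c ρ hc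
  have hs' : ∀ x, c (s x) = ρ x := fun x => LinearMap.congr_fun hs x
  have hsurj : Function.Surjective s := by
    rw [← LinearMap.range_eq_top]
    apply hcs
    rw [eq_top_iff]
    rintro x -
    obtain ⟨y, hy⟩ := hρ (c x)
    refine Submodule.mem_sup.2 ⟨s y, ⟨y, rfl⟩, x - s y, ?_, by abel⟩
    rw [LinearMap.mem_ker, map_sub, hs', hy, sub_self]
  obtain ⟨t, ht⟩ := Module.projective_lifting_property s LinearMap.id hsurj
  have ht' : ∀ x, s (t x) = x := fun x => LinearMap.congr_fun ht x
  let Q' := LinearMap.ker s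
  let r : (P →ₗ[R] R) →ₗ[R] Q' := LinearMap.codRestrict Q' (LinearMap.id - t ∘ₗ s) (by
    intro x; change s (x - t (s x)) = 0; rw [map_sub, ht', sub_self])
  have hr : ∀ q : Q', r q = q := by
    intro q
    ext1
    change (q : P →ₗ[R] R) - t (s q) = q
    rw [show s q = 0 from q.2, map_zero, sub_zero]
  have hQ'p : Module.Projective R Q' :=
    Module.Projective.of_split Q'.subtype r (LinearMap.ext hr)
  have hQ'f : Module.Finite R Q' := Module.Finite.of_surjective r (fun q => ⟨q, hr q⟩)
  have hlift : ∀ q : Q', ∃ h : M →ₗ[R] R, (q : P →ₗ[R] R) = h ∘ₗ π := fun q => by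
    rw [← hker, ← hs', show s q = 0 from q.2, map_zero]
  have hinj : Function.Injective (LinearMap.lcomp R R π) := by
    intro f g hfg
    ext m
    obtain ⟨p, rfl⟩ := hπ m
    exact LinearMap.congr_fun hfg p
  let ι0 : Q' →ₗ[R] (P →ₗ[R] R) := Submodule.subtype Q'
  have hlift' : ∀ q : Q', ∃ h : M →ₗ[R] R, ι0 q = LinearMap.lcomp R R π h := hlift
  obtain ⟨k, hk⟩ := lift_inj (M := M →ₗ[R] R) (N := P →ₗ[R] R) (Q := Q')
    (LinearMap.lcomp R R π) hinj ι0 hlift'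
  have hgs : Function.Surjective k.flip := by
    intro φ
    obtain ⟨p, hp⟩ := proj_eval_surj (φ ∘ₗ r)
    refine ⟨π p, ?_⟩
    ext q
    have h1 : φ (r q) = (q : P →ₗ[R] R) p := hp q
    rw [hr] at h1
    rw [h1, LinearMap.flip_apply]
    exact LinearMap.congr_fun (hk q) p
  have hsub : Subsingleton (Q' →ₗ[R] R) := stable_surj hst k.flip hgs
  have hz : ∀ x, s x = 0 → x = 0 := by
    intro x hx
    have h0 : (⟨x, hx⟩ : Q') = 0 := proj_eq_zero (R := R) (P := Q') ⟨x, hx⟩ (fun f => by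
      rw [Subsingleton.elim f 0]; rfl)
    exact congrArg Subtype.val h0
  intro N hN
  have h1 : Submodule.map s N ⊔ LinearMap.ker c = ⊤ := by
    rw [eq_top_iff]
    rintro y -
    obtain ⟨x, rfl⟩ := hsurj y
    have hx : x ∈ N ⊔ LinearMap.ker ρ := hN ▸ Submodule.mem_top
    obtain ⟨a, ha, b, hb, rfl⟩ := Submodule.mem_sup.1 hx
    refine Submodule.mem_sup.2 ⟨s a, ⟨a, ha, rfl⟩, s b, ?_, (map_add _ _ _).symm⟩
    rw [LinearMap.mem_ker, hs']; exact hb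
  have h2 := hcs _ h1
  rw [eq_top_iff]
  rintro x -
  have h3 : s x ∈ Submodule.map s N := h2 ▸ Submodule.mem_top
  obtain ⟨y, hy, hxy⟩ := h3
  have : x - y = 0 := hz _ (by rw [map_sub, hxy, sub_self])
  rw [sub_eq_zero.1 this]; exact hy

/-- stability of `λM`. -/
theorem stable_of_torsionless [Module.Finite R P] [Module.Projective R P]
    (π : P →ₗ[R] M) (hsup : Superfl (LinearMap.ker π))
    (htor : ∀ m : M, (∀ f : M →ₗ[R] R, f m = 0) → m = 0)
    (ρ : (P →ₗ[R] R) →ₗ[R] L) (hρ : Function.Surjective ρ)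
    (hker : ∀ h : M →ₗ[R] R, ρ (h ∘ₗ π) = 0)
    [Module.Projective R Q] (g : L →ₗ[R] Q) (hg : Function.Surjective g) : Subsingleton Q := by
  obtain ⟨t, ht⟩ := Module.projective_lifting_property (g ∘ₗ ρ) LinearMap.id (hg.comp hρ)
  have ht' : ∀ x, g (ρ (t x)) = x := fun x => LinearMap.congr_fun ht x
  let τ : P →ₗ[R] (Q →ₗ[R] R) := t.flip
  have h1 : LinearMap.ker τ ⊔ LinearMap.ker π = ⊤ := by
    rw [eq_top_iff]
    rintro p -
    obtain ⟨p', hp'⟩ := proj_eval_surj (τ p ∘ₗ g ∘ₗ ρ)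
    refine Submodule.mem_sup.2 ⟨p - p', ?_, p', ?_, by abel⟩
    · rw [LinearMap.mem_ker, map_sub, sub_eq_zero]
      ext x
      have := hp' (t x)
      change τ p (g (ρ (t x))) = t x p' at this
      rw [ht'] at this
      exact this
    · apply htor
      intro f
      have := hp' (f ∘ₗ π)
      change τ p (g (ρ (f ∘ₗ π))) = f (π p') at this
      rw [hker, map_zero, map_zero] at this
      exact this.symm
  have h2 := hsup _ h1
  have h3 : ∀ x, t x = 0 := by
    intro x
    ext p
    have : p ∈ LinearMap.ker τ := h2 ▸ Submodule.mem_top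
    exact LinearMap.congr_fun this x
  refine ⟨fun a b => ?_⟩
  rw [← ht' a, ← ht' b, h3, h3]
end covers

/-! ### Part 3: totally reflexive modules -/

section refl
variable {R}

theorem finite_hom [IsNoetherianRing R] {M C : Type u} [AddCommGroup M] [Module R M]
    [AddCommGroup C] [Module R C] [Module.Finite R M] [Module.Finite R C] :
    Module.Finite R (M →ₗ[R] C) := by
  obtain ⟨n, f, hf⟩ := Module.Finite.exists_fin' R M
  refine Module.Finite.of_injective (LinearMap.lcomp R C f) ?_
  intro a b hab
  ext m
  obtain ⟨p, rfl⟩ := hf m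
  exact LinearMap.congr_fun hab p

theorem totRefl_dual [IsNoetherianRing R] (C M : ModuleCat.{u} R) (hC : IsSemidualizing R C)
    (hM : IsTotallyCReflexive R C M) :
    IsTotallyCReflexive R C (ModuleCat.of R (↥M →ₗ[R] ↥C)) := by
  obtain ⟨h1, h2, h3, h4⟩ := hM
  have := hC.1
  refine ⟨finite_hom (R := R), ⟨?_, ?_⟩, h4, ?_⟩
  · intro φ ψ h
    refine LinearMap.ext fun m => ?_
    exact LinearMap.congr_fun h (bidualityMap R C M m)
  · intro β
    refine ⟨β ∘ₗ bidualityMap R C M, ?_⟩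
    refine LinearMap.ext fun α => ?_
    obtain ⟨m, rfl⟩ := h2.2 α
    rfl
  · rw [extVan_iff] at h3 ⊢
    exact extVan_of_equiv (LinearEquiv.ofBijective (bidualityMap R C M) h2).symm h3

theorem totRefl_proj [IsNoetherianRing R] (C P : ModuleCat.{u} R) (hC : IsSemidualizing R C)
    (hf : Module.Finite R ↥P) (hp : Module.Projective R ↥P) : IsTotallyCReflexive R C P := by
  obtain ⟨h1, h2, h3⟩ := hC
  have hann : ∀ r : R, (∀ c : ↥C, r • c = 0) → r = 0 := by
    intro r hr
    apply h2.1
    ext c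
    simp [hr]
  refine ⟨hf, ⟨?_, ?_⟩, ?_, ?_⟩
  · rw [injective_iff_map_eq_zero]
    intro p h
    apply proj_eq_zero (R := R)
    intro f
    apply hann
    intro c
    exact LinearMap.congr_fun h (LinearMap.toSpanSingleton R ↥C c ∘ₗ f)
  · intro α
    let e : R →ₗ[R] (↥C →ₗ[R] ↥C) := LinearMap.toSpanSingleton R _ LinearMap.id
    have he : Function.Bijective e := h2
    let E := LinearEquiv.ofBijective e he
    let γ : (↥P →ₗ[R] R) →ₗ[R] (↥C →ₗ[R] ↥C) :=
      TensorProduct.curry (α ∘ₗ dualTensorHom R ↥P ↥C)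
    obtain ⟨p, hp⟩ := proj_eval_surj (E.symm.toLinearMap ∘ₗ γ)
    refine ⟨p, ?_⟩
    refine LinearMap.ext fun φ => ?_
    obtain ⟨x, rfl⟩ := (dualTensorHom_bijective (R := R) (M := ↥P) (N := ↥C)).2 φ
    induction x with
    | zero => simp
    | add x y hx hy => rw [map_add, map_add, map_add, hx, hy]
    | tmul f c =>
      have h5 : E (f p) = γ f := by
        rw [← hp f]; exact E.apply_symm_apply _
      have h6 := LinearMap.congr_fun h5 c
      exact h6
  · rw [extVan_iff]; exact extVan_of_projective hp
  · rw [extVan_iff] at h3 ⊢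
    obtain ⟨n, a, b, -, -, hab⟩ := Module.Finite.exists_comp_eq_id_of_projective R ↥P
    refine extVan_of_sum (B := C) (n := n)
      (fun i => LinearMap.applyₗ (a (Pi.single i 1)))
      (fun i => (LinearMap.lcomp R ↥C (LinearMap.proj i ∘ₗ b)) ∘ₗ
        LinearMap.flip (LinearMap.lsmul R ↥C)) ?_ h3
    intro φ
    refine LinearMap.ext fun p => ?_
    have h2 : a (b p) = p := LinearMap.congr_fun hab p
    have h3 : b p = ∑ i, b p i • (Pi.single i (1 : R) : Fin n → R) := by
      ext j; simp [Finset.sum_apply, Pi.single_apply]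
    conv_rhs => rw [← h2, h3]
    simp

theorem totRefl_coker [IsNoetherianRing R] (C A B X : ModuleCat.{u} R)
    (f : ↥A →ₗ[R] ↥B) (g : ↥B →ₗ[R] ↥X)
    (hf : Function.Injective f) (hfg : Function.Exact f g) (hg : Function.Surjective g)
    (hA : IsTotallyCReflexive R C A) (hB : IsTotallyCReflexive R C B)
    (hs : Function.Surjective (fun φ : ↥B →ₗ[R] ↥C => φ ∘ₗ f)) :
    IsTotallyCReflexive R C X := by
  obtain ⟨a1, a2, a3, a4⟩ := hA
  obtain ⟨b1, b2, b3, b4⟩ := hB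
  rw [extVan_iff] at a3 a4 b3 b4
  -- the dual sequence
  let f' : (↥B →ₗ[R] ↥C) →ₗ[R] (↥A →ₗ[R] ↥C) := LinearMap.lcomp R ↥C f
  let g' : (↥X →ₗ[R] ↥C) →ₗ[R] (↥B →ₗ[R] ↥C) := LinearMap.lcomp R ↥C g
  have hg' : Function.Injective g' := by
    intro a b hab
    ext m
    obtain ⟨p, rfl⟩ := hg m
    exact LinearMap.congr_fun hab p
  have hex' : Function.Exact g' f' := by
    intro φ
    constructor
    · intro h
      have hz : ∀ b, g b = 0 → φ b = 0 := by
        intro b hb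
        obtain ⟨a, rfl⟩ := (hfg b).1 hb
        exact LinearMap.congr_fun h a
      obtain ⟨ψ, hψ⟩ := factor_surj g hg φ hz
      exact ⟨ψ, LinearMap.ext hψ⟩
    · rintro ⟨ψ, rfl⟩
      ext a
      change ψ (g (f a)) = 0
      rw [hfg.apply_apply_eq_zero, map_zero]
  have hs' : Function.Surjective f' := hs
  have e1 : ExtVan R X C := extVan_coker f g hf hfg hg a3 b3 hs
  have e2 : ExtVan R (ModuleCat.of R (↥X →ₗ[R] ↥C)) C :=
    extVan_ker (A := ModuleCat.of R (↥X →ₗ[R] ↥C)) (B := ModuleCat.of R (↥B →ₗ[R] ↥C))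
      (X := ModuleCat.of R (↥A →ₗ[R] ↥C)) g' f' hg' hex' hs' b4 a4
  have e3 := lcomp_surj_of_ext (A := ModuleCat.of R (↥X →ₗ[R] ↥C))
      (B := ModuleCat.of R (↥B →ₗ[R] ↥C))
      (X := ModuleCat.of R (↥A →ₗ[R] ↥C)) (C := C) g' f' hg' hex' hs' a4
  refine ⟨Module.Finite.of_surjective g hg, ⟨?_, ?_⟩, ?_, ?_⟩
  · rw [injective_iff_map_eq_zero]
    intro x hx
    obtain ⟨b, rfl⟩ := hg x
    -- eval b vanishes on X^C, so factors through A^C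
    obtain ⟨β, hβ⟩ : ∃ β : (↥A →ₗ[R] ↥C) →ₗ[R] ↥C, ∀ φ, β (f' φ) = φ b :=
      factor_surj f' hs' (bidualityMap R C B b) (by
        intro φ hφ
        obtain ⟨ψ, rfl⟩ := (hex' φ).1 hφ
        exact LinearMap.congr_fun hx ψ)
    obtain ⟨a, ha⟩ := a2.2 β
    have : f a = b := by
      apply b2.1
      refine LinearMap.ext fun φ => ?_
      have h5 : β (f' φ) = φ (f a) := by rw [← ha]; rfl
      rw [hβ] at h5
      exact h5.symm
    rw [← this, hfg.apply_apply_eq_zero]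
  · intro α
    obtain ⟨β, hβ⟩ := e3 α
    obtain ⟨b, rfl⟩ := b2.2 β
    refine ⟨g b, ?_⟩
    refine LinearMap.ext fun ψ => ?_
    exact LinearMap.congr_fun hβ ψ
  · rw [extVan_iff]; exact e1
  · rw [extVan_iff]; exact e2

theorem gcdim_zero_iff (C M : ModuleCat.{u} R) : gcdim R C M = 0 ↔ IsTotallyCReflexive R C M := by
  unfold gcdim
  constructor
  · intro h
    rcases Set.eq_empty_or_nonempty ((fun n : ℕ => (n : ℕ∞)) '' {n | gcdimLE R C n M}) with he | hne
    · rw [he] at h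
      simp at h
    · have := csInf_mem hne
      rw [h] at this
      obtain ⟨n, hn, h0⟩ := this
      have : n = 0 := by simpa using h0
      subst this
      exact hn
  · intro h
    exact le_antisymm (sInf_le ⟨0, h, rfl⟩) bot_le
end refl

/-! ### Part 4: the main argument -/

section core
variable {R}

theorem semidual_ann (C : ModuleCat.{u} R) (hC : IsSemidualizing R C) (r : R)
    (h : ∀ c : ↥C, r • c = 0) : r = 0 := by
  apply hC.2.1.1
  ext c
  simp [h]

theorem subsingleton_of_hom_eq_zero [IsNoetherianRing R] (C : ModuleCat.{u} R)
    (hC : IsSemidualizing R C) (K : Type u) [AddCommGroup K] [Module R K] [Module.Finite R K]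
    (h : ∀ f : ↥C →ₗ[R] K, f = 0) : Subsingleton K := by
  have := hC.1
  have h1 : Subsingleton (↥C →ₗ[R] K) := ⟨fun a b => by rw [h a, h b]⟩
  obtain ⟨r, hr, hreg⟩ := IsSMulRegular.subsingleton_linearMap_iff.1 h1
  have hr0 : r = 0 := by
    exact semidual_ann C hC r (fun c => Module.mem_annihilator.1 hr c)
  subst hr0
  exact hreg.subsingleton

/-- injectivity of `L ⊗ C → P ⊗ C`. -/
theorem rTensor_inj [IsNoetherianRing R] (C : ModuleCat.{u} R)
    (hC : IsSemidualizing R C) {L P : Type u} [AddCommGroup L] [Module R L]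
    [AddCommGroup P] [Module R P] [Module.Finite R L] [Module.Projective R P]
    (ι : L →ₗ[R] P) (hι : Function.Injective ι)
    (hL : Function.Bijective (TensorProduct.mk R L ↥C)) :
    Function.Injective (LinearMap.rTensor ↥C ι) := by
  have := hC.1
  have hK : Subsingleton (LinearMap.ker (LinearMap.rTensor ↥C ι)) := by
    apply subsingleton_of_hom_eq_zero C hC
    intro h
    obtain ⟨l, hl⟩ := hL.2 ((LinearMap.ker (LinearMap.rTensor ↥C ι)).subtype ∘ₗ h)
    have hl' : ∀ c, l ⊗ₜ[R] c = (h c : L ⊗[R] ↥C) := fun c => LinearMap.congr_fun hl c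
    have h1 : ∀ c : ↥C, ι l ⊗ₜ[R] c = 0 := by
      intro c
      rw [← LinearMap.rTensor_tmul, hl']
      exact (h c).2
    have h2 : ι l = 0 := by
      apply proj_eq_zero (R := R)
      intro f
      apply semidual_ann C hC
      intro c
      have h3 := congrArg (TensorProduct.lid R ↥C ∘ LinearMap.rTensor ↥C f) (h1 c)
      simp only [Function.comp_apply, LinearMap.rTensor_tmul, TensorProduct.lid_tmul, map_zero] at h3
      exact h3
    have h4 : l = 0 := hι (by rw [h2, map_zero])
    ext c
    rw [← hl', h4]
    simp
  rw [injective_iff_map_eq_zero]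
  intro x hx
  exact congrArg Subtype.val (Subsingleton.elim (⟨x, hx⟩ : LinearMap.ker (LinearMap.rTensor ↥C ι)) 0)

theorem main_core [IsNoetherianRing R] (C : ModuleCat.{u} R)
    (hC : IsSemidualizing R C) (M P0 P1 L : ModuleCat.{u} R)
    (hM : IsTotallyCReflexive R C M)
    (f0 : Module.Finite R ↥P0) (p0 : Module.Projective R ↥P0)
    (f1 : Module.Finite R ↥P1) (p1 : Module.Projective R ↥P1)
    (d : ↥P1 →ₗ[R] ↥P0) (π : ↥P0 →ₗ[R] ↥M) (hπ : Function.Surjective π)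
    (hd : LinearMap.range d = LinearMap.ker π)
    (ρ : (↥P0 →ₗ[R] R) →ₗ[R] ↥L) (hρ : Function.Surjective ρ)
    (ι : ↥L →ₗ[R] (↥P1 →ₗ[R] R)) (hι : Function.Injective ι)
    (hιρ : ∀ f, ι (ρ f) = f ∘ₗ d)
    (hL : Function.Bijective (TensorProduct.mk R ↥L ↥C)) :
    (∀ m : ↥M, (∀ f : ↥M →ₗ[R] R, f m = 0) → m = 0) ∧
      IsTotallyCReflexive R C (ModuleCat.of R (↥L ⊗[R] ↥C)) := by
  have fL : Module.Finite R ↥L := Module.Finite.of_surjective ρ hρ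
  have hinj := rTensor_inj C hC ι hι hL
  let θ0 := LinearEquiv.ofBijective (dualTensorHom R ↥P0 ↥C) dualTensorHom_bijective
  let Φ : (↥P0 →ₗ[R] ↥C) →ₗ[R] (↥L ⊗[R] ↥C) := LinearMap.rTensor ↥C ρ ∘ₗ θ0.symm.toLinearMap
  have hΦs : Function.Surjective Φ :=
    (LinearMap.rTensor_surjective ↥C hρ).comp θ0.symm.surjective
  have hΦd : ∀ φ, dualTensorHom R ↥P1 ↥C (LinearMap.rTensor ↥C ι (Φ φ)) = φ ∘ₗ d := by
    intro φ
    obtain ⟨x, rfl⟩ := θ0.surjective φ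
    change dualTensorHom R ↥P1 ↥C
      (LinearMap.rTensor ↥C ι (LinearMap.rTensor ↥C ρ (θ0.symm (θ0 x)))) =
        (dualTensorHom R ↥P0 ↥C x) ∘ₗ d
    rw [θ0.symm_apply_apply]
    induction x with
    | zero => simp
    | add x y hx hy => simp only [map_add, hx, hy, LinearMap.add_comp]
    | tmul f c =>
      ext p
      simp [hιρ]
  have hΦ0 : ∀ φ, Φ φ = 0 ↔ ∃ ψ : ↥M →ₗ[R] ↥C, ψ ∘ₗ π = φ := by
    intro φ
    have h1 : Φ φ = 0 ↔ φ ∘ₗ d = 0 := by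
      rw [← hΦd, map_eq_zero_iff _ dualTensorHom_bijective.1, map_eq_zero_iff _ hinj]
    rw [h1]
    constructor
    · intro h
      obtain ⟨ψ, hψ⟩ := factor_surj π hπ φ (by
        intro b hb
        have : b ∈ LinearMap.range d := hd ▸ hb
        obtain ⟨x, rfl⟩ := this
        exact LinearMap.congr_fun h x)
      exact ⟨ψ, LinearMap.ext hψ⟩
    · rintro ⟨ψ, rfl⟩
      ext x
      have : d x ∈ LinearMap.ker π := hd ▸ ⟨x, rfl⟩
      change ψ (π (d x)) = 0
      rw [show π (d x) = 0 from this, map_zero]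
  let Ms : (↥M →ₗ[R] ↥C) →ₗ[R] (↥P0 →ₗ[R] ↥C) := LinearMap.lcomp R ↥C π
  have hMi : Function.Injective Ms := by
    intro a b hab
    ext m
    obtain ⟨p, rfl⟩ := hπ m
    exact LinearMap.congr_fun hab p
  have hMex : Function.Exact Ms Φ := fun φ => hΦ0 φ
  have hP0 := totRefl_proj C P0 hC f0 p0
  constructor
  · -- torsionless
    intro m hm
    apply hM.2.1.1
    rw [map_zero]
    refine LinearMap.ext fun φ => ?_
    change φ m = 0
    have hk : Function.Exact (LinearMap.lcomp R R π) ρ := by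
      intro f
      rw [← map_eq_zero_iff ι hι, hιρ]
      constructor
      · intro h
        obtain ⟨ψ, hψ⟩ := factor_surj π hπ f (by
          intro b hb
          have : b ∈ LinearMap.range d := hd ▸ hb
          obtain ⟨x, rfl⟩ := this
          exact LinearMap.congr_fun h x)
        exact ⟨ψ, LinearMap.ext hψ⟩
      · rintro ⟨ψ, rfl⟩
        ext x
        have : d x ∈ LinearMap.ker π := hd ▸ ⟨x, rfl⟩
        change ψ (π (d x)) = 0
        rw [show π (d x) = 0 from this, map_zero]
    have hex := rTensor_exact ↥C hk hρ
    have h0 : LinearMap.rTensor ↥C ρ (θ0.symm (φ ∘ₗ π)) = 0 := (hΦ0 _).2 ⟨φ, rfl⟩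
    obtain ⟨y, hy⟩ := (hex _).1 h0
    have hy' : dualTensorHom R ↥P0 ↥C (LinearMap.rTensor ↥C (LinearMap.lcomp R R π) y) = φ ∘ₗ π := by
      rw [hy]; exact θ0.apply_symm_apply _
    obtain ⟨p, rfl⟩ := hπ m
    rw [show φ (π p) = (φ ∘ₗ π) p from rfl, ← hy']
    clear hy hy'
    induction y with
    | zero => simp
    | add x y hx hy => simp only [map_add, LinearMap.add_apply, hx, hy, add_zero]
    | tmul f c => simp [hm f]
  · refine totRefl_coker C (ModuleCat.of R (↥M →ₗ[R] ↥C)) (ModuleCat.of R (↥P0 →ₗ[R] ↥C))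
      (ModuleCat.of R (↥L ⊗[R] ↥C)) Ms Φ hMi hMex hΦs (totRefl_dual C M hC hM)
      (totRefl_dual C P0 hC hP0) ?_
    intro α
    obtain ⟨m, rfl⟩ := hM.2.1.2 α
    obtain ⟨p, rfl⟩ := hπ m
    exact ⟨bidualityMap R C P0 p, rfl⟩

theorem lambda_data (M L : ModuleCat.{u} R) (h : IsLambda R M L) :
    ∃ (P1 P0 : ModuleCat.{u} R) (d : ↥P1 →ₗ[R] ↥P0) (π : ↥P0 →ₗ[R] ↥M),
      IsMinimalPresentation R d π ∧
      ∃ (ρ : (↥P0 →ₗ[R] R) →ₗ[R] ↥L) (ι : ↥L →ₗ[R] (↥P1 →ₗ[R] R)),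
        Function.Surjective ρ ∧ Function.Injective ι ∧ ∀ f, ι (ρ f) = f ∘ₗ d := by
  obtain ⟨T, ⟨P1, P0, d, π, hmin, ⟨e⟩⟩, Q, c, hQf, hc, ⟨eL⟩⟩ := h
  refine ⟨P1, P0, d, π, hmin, ?_⟩
  obtain ⟨m1, m2, m3, m4, m5, m6⟩ := hmin
  have hs : Superfl (LinearMap.range (LinearMap.lcomp R R d)) := by
    apply superfl_range_dual
    rw [m4]; exact m3.2.2
  let c' : (↥P1 →ₗ[R] R) →ₗ[R] ↥T :=
    e.symm.toLinearMap ∘ₗ (LinearMap.range (LinearMap.lcomp R R d)).mkQ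
  have hker : LinearMap.ker c' = LinearMap.range (LinearMap.lcomp R R d) := by
    rw [LinearEquiv.ker_comp, Submodule.ker_mkQ]
  have hc's : Function.Surjective c' := e.symm.surjective.comp (Submodule.mkQ_surjective _)
  have := hc.1
  obtain ⟨e2⟩ := cover_unique c c' hc.2.1 hc's hc.2.2 (hker ▸ hs)
  let e3 : ↥L ≃ₗ[R] LinearMap.range (LinearMap.lcomp R R d) :=
    eL.trans (e2.trans (LinearEquiv.ofEq _ _ hker))
  refine ⟨e3.symm.toLinearMap ∘ₗ (LinearMap.lcomp R R d).rangeRestrict,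
    (LinearMap.range (LinearMap.lcomp R R d)).subtype ∘ₗ e3.toLinearMap,
    e3.symm.surjective.comp (LinearMap.surjective_rangeRestrict _),
    (Submodule.subtype_injective _).comp e3.injective, fun f => ?_⟩
  change ((e3 (e3.symm ((LinearMap.lcomp R R d).rangeRestrict f)) :
    LinearMap.range (LinearMap.lcomp R R d)) : ↥P1 →ₗ[R] R) = f ∘ₗ d
  rw [e3.apply_symm_apply]
  rfl

theorem isLambda_range (M P1 P0 : ModuleCat.{u} R) (d : ↥P1 →ₗ[R] ↥P0) (π : ↥P0 →ₗ[R] ↥M)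
    (hmin : IsMinimalPresentation R d π) :
    IsLambda R M (ModuleCat.of R (LinearMap.range (LinearMap.lcomp R R d))) := by
  have hmin' := hmin
  obtain ⟨m1, m2, m3, m4, m5, m6⟩ := hmin'
  have hs : Superfl (LinearMap.range (LinearMap.lcomp R R d)) := by
    apply superfl_range_dual
    rw [m4]; exact m3.2.2
  have hk : LinearMap.ker (LinearMap.range (LinearMap.lcomp R R d)).mkQ =
    LinearMap.range (LinearMap.lcomp R R d) := Submodule.ker_mkQ _
  refine ⟨ModuleCat.of R ((↥P1 →ₗ[R] R) ⧸ LinearMap.range (LinearMap.lcomp R R d)),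
    ⟨P1, P0, d, π, hmin, ⟨LinearEquiv.refl R _⟩⟩,
    ModuleCat.of R (↥P1 →ₗ[R] R), (LinearMap.range (LinearMap.lcomp R R d)).mkQ,
    (inferInstance : Module.Finite R (Module.Dual R ↥P1)),
    ⟨(inferInstance : Module.Projective R (Module.Dual R ↥P1)), Submodule.mkQ_surjective _, ?_⟩,
    ⟨LinearEquiv.ofEq _ _ hk.symm⟩⟩
  have := hk.symm ▸ hs
  exact this

/-- minimal presentations exist, extending a given cover. -/
theorem exists_presentation [IsNoetherianRing R] (hsp : IsSemiperfectRing R)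
    (M P0 : ModuleCat.{u} R) (π : ↥P0 →ₗ[R] ↥M) (hf : Module.Finite R ↥P0)
    (hπ : IsProjectiveCover R π) :
    ∃ (P1 : ModuleCat.{u} R) (d : ↥P1 →ₗ[R] ↥P0), IsMinimalPresentation R d π := by
  obtain ⟨P1, c, hf1, hc⟩ := hsp (ModuleCat.of R (LinearMap.ker π))
    (inferInstance : Module.Finite R (LinearMap.ker π))
  let d : ↥P1 →ₗ[R] ↥P0 := (LinearMap.ker π).subtype ∘ₗ c
  have hk : LinearMap.ker d = LinearMap.ker c := by
    ext x
    simp only [LinearMap.mem_ker]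
    exact map_eq_zero_iff (LinearMap.ker π).subtype (Submodule.subtype_injective _)
  refine ⟨P1, d, hf1, hf, hπ, ?_, hc.1, ?_⟩
  · ext x
    constructor
    · rintro ⟨y, rfl⟩
      exact (c y).2
    · intro hx
      obtain ⟨y, hy⟩ := hc.2.1 ⟨x, hx⟩
      exact ⟨y, congrArg Subtype.val hy⟩
  · rw [hk]; exact hc.2.2

/-- the embedding of a torsionless module as a range of a dual map. -/
theorem linked_iso {M P0 Q : Type u} [AddCommGroup M] [Module R M] [AddCommGroup P0] [Module R P0]
    [AddCommGroup Q] [Module R Q] [Module.Finite R P0] [Module.Projective R P0]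
    (π : P0 →ₗ[R] M) (hπ : Function.Surjective π)
    (htor : ∀ m : M, (∀ f : M →ₗ[R] R, f m = 0) → m = 0)
    (e : Q →ₗ[R] (P0 →ₗ[R] R))
    (he : ∀ f, f ∈ LinearMap.range e ↔ ∃ h : M →ₗ[R] R, f = h ∘ₗ π) :
    Nonempty (M ≃ₗ[R] LinearMap.range (LinearMap.lcomp R R e)) := by
  have hinj : Function.Injective (LinearMap.lcomp R R π) := by
    intro f g hfg
    ext m
    obtain ⟨p, rfl⟩ := hπ m
    exact LinearMap.congr_fun hfg p
  have hlift : ∀ q : Q, ∃ h : M →ₗ[R] R, e q = LinearMap.lcomp R R π h :=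
    fun q => (he _).1 ⟨q, rfl⟩
  obtain ⟨k, hk⟩ := lift_inj (LinearMap.lcomp R R π) hinj e hlift
  have hks : Function.Surjective k := by
    intro h
    obtain ⟨q, hq⟩ := (he (h ∘ₗ π)).2 ⟨h, rfl⟩
    refine ⟨q, hinj ?_⟩
    rw [hk]; exact hq
  let g : M →ₗ[R] (Q →ₗ[R] R) := k.flip
  have hg : Function.Injective g := by
    rw [injective_iff_map_eq_zero]
    intro m hm
    apply htor
    intro f
    obtain ⟨q, rfl⟩ := hks f
    exact LinearMap.congr_fun hm q
  have hrange : LinearMap.range g = LinearMap.range (LinearMap.lcomp R R e) := by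
    ext x
    constructor
    · rintro ⟨m, rfl⟩
      obtain ⟨p, rfl⟩ := hπ m
      refine ⟨Module.Dual.eval R P0 p, ?_⟩
      ext q
      exact (LinearMap.congr_fun (hk q) p).symm
    · rintro ⟨α, rfl⟩
      obtain ⟨p, hp⟩ := proj_eval_surj (R := R) (P := P0) α
      refine ⟨π p, ?_⟩
      ext q
      change k q (π p) = α (e q)
      rw [hp (e q)]
      exact LinearMap.congr_fun (hk q) p
  exact ⟨(LinearEquiv.ofInjective g hg).trans (LinearEquiv.ofEq _ _ hrange)⟩

theorem ker_rangeRestrict_iff {M P0 P1 : Type u} [AddCommGroup M] [Module R M]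
    [AddCommGroup P0] [Module R P0] [AddCommGroup P1] [Module R P1]
    (d : P1 →ₗ[R] P0) (π : P0 →ₗ[R] M) (hπ : Function.Surjective π)
    (hd : LinearMap.range d = LinearMap.ker π) (f : P0 →ₗ[R] R) :
    (LinearMap.lcomp R R d).rangeRestrict f = 0 ↔ ∃ h : M →ₗ[R] R, f = h ∘ₗ π := by
  have h1 : (LinearMap.lcomp R R d).rangeRestrict f = 0 ↔ f ∘ₗ d = 0 := by
    constructor
    · intro h; exact congrArg Subtype.val h
    · intro h; exact Subtype.ext h
  rw [h1]
  constructor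
  · intro h
    obtain ⟨ψ, hψ⟩ := factor_surj π hπ f (by
      intro b hb
      have : b ∈ LinearMap.range d := hd ▸ hb
      obtain ⟨x, rfl⟩ := this
      exact LinearMap.congr_fun h x)
    exact ⟨ψ, (LinearMap.ext hψ).symm⟩
  · rintro ⟨ψ, rfl⟩
    ext x
    have : d x ∈ LinearMap.ker π := hd ▸ ⟨x, rfl⟩
    change ψ (π (d x)) = 0
    rw [show π (d x) = 0 from this, map_zero]

theorem linked_of_presentation [IsNoetherianRing R] (hsp : IsSemiperfectRing R)
    (M P1 P0 : ModuleCat.{u} R) (d : ↥P1 →ₗ[R] ↥P0) (π : ↥P0 →ₗ[R] ↥M)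
    (hmin : IsMinimalPresentation R d π) (hstable : IsStable R M)
    (htor : ∀ m : ↥M, (∀ f : ↥M →ₗ[R] R, f m = 0) → m = 0) :
    IsHorizontallyLinked R M := by
  have hL1 := isLambda_range M P1 P0 d π hmin
  obtain ⟨m1, m2, m3, m4, m5, m6⟩ := hmin
  have p0 := m3.1
  have hρ := LinearMap.surjective_rangeRestrict (LinearMap.lcomp R R d)
  have hDf : Module.Finite R (↥P0 →ₗ[R] R) := (inferInstance : Module.Finite R (Module.Dual R ↥P0))
  have hDp : Module.Projective R (↥P0 →ₗ[R] R) :=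
    (inferInstance : Module.Projective R (Module.Dual R ↥P0))
  have hLf : Module.Finite R (LinearMap.range (LinearMap.lcomp R R d)) :=
    Module.Finite.of_surjective _ hρ
  have hker := ker_rangeRestrict_iff d π m3.2.1 m4
  obtain ⟨Qc, c, -, hcp, hcs, hck⟩ :=
    hsp (ModuleCat.of R (LinearMap.range (LinearMap.lcomp R R d))) hLf
  have hsup := superfl_ker_of_stable π m3.2.1 hstable _ hρ hker c hcs hck
  obtain ⟨Q, e, hmin2⟩ := exists_presentation hsp
    (ModuleCat.of R (LinearMap.range (LinearMap.lcomp R R d)))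
    (ModuleCat.of R (↥P0 →ₗ[R] R)) (LinearMap.lcomp R R d).rangeRestrict hDf ⟨hDp, hρ, hsup⟩
  have hL2 := isLambda_range _ _ _ _ _ hmin2
  refine ⟨_, _, hL1, hL2, ?_⟩
  have n4 := hmin2.2.2.2.1
  refine linked_iso (Q := ↥Q) π m3.2.1 htor e (fun f => ?_)
  rw [← hker f]
  have n4' := SetLike.ext_iff.1 n4 f
  exact n4'

end core

/-- if `M` is stable with `G_C-dim(M) = 0` and `λM ∈ A_C`, then `M` is
horizontally linked, `λM` is stable and `G_C-dim(λM ⊗ C) = 0`. -/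
theorem statement16 [IsNoetherianRing R] (hsp : IsSemiperfectRing R)
    (C : ModuleCat.{u} R) (hC : IsSemidualizing R C)
    (M : ModuleCat.{u} R) (hMfin : Module.Finite R ↥M)
    (hstable : IsStable R M) (hgc : gcdim R C M = 0)
    (hA : ∀ L : ModuleCat.{u} R, IsLambda R M L → MemAuslanderClass R C L) :
    IsHorizontallyLinked R M ∧
    ∀ L : ModuleCat.{u} R, IsLambda R M L →
      IsStable R L ∧ gcdim R C (ModuleCat.of R (↥L ⊗[R] ↥C)) = 0 := by
  have hM := (gcdim_zero_iff C M).1 hgc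
  have key : ∀ L : ModuleCat.{u} R, IsLambda R M L →
      (∀ m : ↥M, (∀ f : ↥M →ₗ[R] R, f m = 0) → m = 0) ∧
        IsStable R L ∧ gcdim R C (ModuleCat.of R (↥L ⊗[R] ↥C)) = 0 := by
    intro L hL
    obtain ⟨P1, P0, d, π, ⟨m1, m2, m3, m4, m5, m6⟩, ρ, ι, hρ, hι, hιρ⟩ := lambda_data M L hL
    obtain ⟨k1, k2⟩ := main_core C hC M P0 P1 L hM m2 m3.1 m1 m5 d π m3.2.1 m4 ρ hρ ι hι hιρ
      (hA L hL).1
    refine ⟨k1, ?_, (gcdim_zero_iff _ _).2 k2⟩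
    intro P N hP ⟨e⟩
    have := m3.1
    refine stable_of_torsionless π m3.2.2 k1 ρ hρ ?_ (LinearMap.fst R ↥P ↥N ∘ₗ e.toLinearMap) ?_
    · intro h
      apply hι
      rw [hιρ, map_zero]
      ext x
      have : d x ∈ LinearMap.ker π := m4 ▸ ⟨x, rfl⟩
      change h (π (d x)) = 0
      rw [show π (d x) = 0 from this, map_zero]
    · exact fun p => ⟨e.symm (p, 0), by simp⟩
  refine ⟨?_, fun L hL => (key L hL).2⟩
  -- horizontally linked
  obtain ⟨P0, π, f0, hπ⟩ := hsp M hMfin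
  obtain ⟨P1, d, hmin⟩ := exists_presentation hsp M P0 π f0 hπ
  exact linked_of_presentation hsp M P1 P0 d π hmin hstable
    (key _ (isLambda_range M P1 P0 d π hmin)).1

end
end

section
/- Let M be a horizontally linked R-module of finite G_C-dimension. Then grade_R(Ext_R^i(M,C)) ≥ i + 1 for every i > 0. -/
open CategoryTheory TensorProduct

noncomputable section

universe u

variable (R : Type u) [CommRing R]

/-! ## Comparison of `ExtM` with `Abelian.Ext` -/

namespace Aux17

open CategoryTheory Abelian

variable {R}

lemma extMk_eq_zero_zero {X Y : ModuleCat.{u} R} (P : ProjectiveResolution X)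
    (f : P.complex.X 0 ⟶ Y) (hf : P.complex.d 1 0 ≫ f = 0)
    (h : P.extMk f 1 rfl hf = 0) : f = 0 := by
  rw [← P.extEquivCohomologyClass.apply_eq_iff_eq] at h
  simp only [ProjectiveResolution.extEquivCohomologyClass_extMk,
    ProjectiveResolution.extEquivCohomologyClass_zero,
    CochainComplex.HomComplex.CohomologyClass.mk_eq_zero_iff] at h
  rw [CochainComplex.HomComplex.Cocycle.toSingleMk_mem_coboundaries_iff _ _ _ _ _ 1 (by simp)] at h
  obtain ⟨g, hg⟩ := h
  have : P.cochainComplex.d (-(0:ℕ)) 1 = 0 := by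
    apply Limits.IsZero.eq_of_tgt
    exact CochainComplex.isZero_of_isStrictlyLE _ 0 _ (by simp)
  rw [this] at hg
  simp at hg
  rw [← cancel_epi (P.cochainComplexXIso (-(0:ℕ)) 0 rfl).hom]
  simpa using hg.symm

lemma extMk_smul {X Y : ModuleCat.{u} R} (P : ProjectiveResolution X) (r : R) {n : ℕ}
    (f : P.complex.X n ⟶ Y) (m : ℕ) (hm : n + 1 = m) (hf : P.complex.d m n ≫ f = 0) :
    P.extMk (r • f) m hm (by simp [hf]) = r • P.extMk f m hm hf := by
  rw [Ext.smul_eq_comp_mk₀, P.extMk_comp_mk₀]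
  congr 1

/-- The linear map from cocycles to Ext. -/
def cocycleMap {X Y : ModuleCat.{u} R} (P : ProjectiveResolution X) (n : ℕ) :
    LinearMap.ker ((P.complex.linearYonedaObj R Y).d n (n+1)).hom →ₗ[R] Abelian.Ext X Y n where
  toFun f := P.extMk (show P.complex.X n ⟶ Y from f.1) (n+1) rfl f.2
  map_add' _ _ := (P.add_extMk _ _ _ _ _ _).symm
  map_smul' r _ := extMk_smul P r _ _ _ _

lemma cocycleMap_surj {X Y : ModuleCat.{u} R} (P : ProjectiveResolution X) (n : ℕ) :
    Function.Surjective (cocycleMap (Y := Y) P n) := by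
  intro α
  obtain ⟨f, hf, rfl⟩ := P.extMk_surjective α (n+1) rfl
  exact ⟨⟨f, hf⟩, rfl⟩

/-- Comparison. -/
lemma exists_equiv (X Y : ModuleCat.{u} R) (n : ℕ) :
    Nonempty (ExtM R X Y n ≃ₗ[R] Abelian.Ext X Y n) := by
  let P := projectiveResolution X
  let K := P.complex.linearYonedaObj R Y
  let S := K.sc' (n-1) n (n+1)
  have e1 : ExtM R X Y n ≅ K.homology n := P.isoExt n Y
  have e2 : K.homology n ≅ S.homology :=
    ShortComplex.homologyMapIso (K.isoSc' (n-1) n (n+1) (by cases n <;> simp) (by simp))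
  have e3 := S.moduleCatHomologyIso
  refine ⟨(e1 ≪≫ e2 ≪≫ e3).toLinearEquiv ≪≫ₗ ?_⟩
  let φ : LinearMap.ker S.g.hom →ₗ[R] Abelian.Ext X Y n := cocycleMap (Y := Y) P n
  refine (Submodule.quotEquivOfEq _ _ ?_) ≪≫ₗ
    (φ.quotKerEquivOfSurjective (cocycleMap_surj P n))
  ext f
  rw [LinearMap.mem_ker]
  constructor
  · rintro ⟨g, rfl⟩
    cases n with
    | zero =>
      have : S.f = 0 := K.shape _ _ (by simp)
      have h0 : S.moduleCatToCycles g = 0 := by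
        apply Subtype.ext
        change S.f.hom g = 0
        rw [this]
        rfl
      rw [h0, map_zero]
    | succ p =>
      exact (P.extMk_eq_zero_iff _ _ rfl (S.moduleCatToCycles g).2 p rfl).2 ⟨g, rfl⟩
  · intro h
    cases n with
    | zero =>
      have : f = 0 := Subtype.ext (extMk_eq_zero_zero P _ f.2 h)
      rw [this]
      exact Submodule.zero_mem _
    | succ p =>
      obtain ⟨g, hg⟩ := (P.extMk_eq_zero_iff _ _ rfl f.2 p rfl).1 h
      exact ⟨g, Subtype.ext hg⟩

end Aux17

/-! ## Exact sequences -/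

namespace Aux17

open CategoryTheory Abelian

variable {R}

/-- A short complex from linear maps. -/
abbrev sc {K X N : ModuleCat.{u} R} (f : ↥K →ₗ[R] ↥X) (g : ↥X →ₗ[R] ↥N)
    (he : LinearMap.ker g = LinearMap.range f) : ShortComplex (ModuleCat.{u} R) :=
  ShortComplex.mk (ModuleCat.ofHom f) (ModuleCat.ofHom g) (by
    ext x
    have : f x ∈ LinearMap.ker g := he ▸ ⟨x, rfl⟩
    simpa using this)

lemma sc_exact {K X N : ModuleCat.{u} R} {f : ↥K →ₗ[R] ↥X} {g : ↥X →ₗ[R] ↥N}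
    (hf : Function.Injective f) (hg : Function.Surjective g)
    (he : LinearMap.ker g = LinearMap.range f) : (sc f g he).ShortExact where
  exact := (ShortComplex.ShortExact.moduleCat_exact_iff_function_exact _).2
    (LinearMap.exact_iff.2 he)
  mono_f := (ModuleCat.mono_iff_injective _).2 hf
  epi_g := (ModuleCat.epi_iff_surjective _).2 hg

/-- `V` is killed by an element of `S`. -/
def VZ (S : Submonoid R) (V : Type u) [AddCommGroup V] [Module R V] : Prop :=
  ∃ s ∈ S, ∀ v : V, s • v = 0

lemma VZ.of_sub (S : Submonoid R) {V : Type u} [AddCommGroup V] [Module R V]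
    (h : Subsingleton V) : VZ S V :=
  ⟨1, S.one_mem, fun _ => Subsingleton.elim _ _⟩

lemma VZ.sub {V : Type u} [AddCommGroup V] [Module R V] (h : VZ (⊥ : Submonoid R) V) :
    Subsingleton V := by
  obtain ⟨s, hs, h⟩ := h
  rw [Submonoid.mem_bot] at hs
  subst hs
  exact ⟨fun a b => by rw [← one_smul R a, ← one_smul R b, h, h]⟩

lemma VZ.of_exact {S : Submonoid R} {A B D : Type u} [AddCommGroup A] [Module R A]
    [AddCommGroup B] [Module R B] [AddCommGroup D] [Module R D]
    (f : A → B) (g : B → D) (hf : ∀ (r : R) a, f (r • a) = r • f a)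
    (hg : ∀ (r : R) b, g (r • b) = r • g b) (f0 : f 0 = 0)
    (hex : ∀ b, g b = 0 → ∃ a, f a = b) (hA : VZ S A) (hD : VZ S D) : VZ S B := by
  obtain ⟨s, hs, hA⟩ := hA
  obtain ⟨t, ht, hD⟩ := hD
  refine ⟨s * t, S.mul_mem hs ht, fun b => ?_⟩
  obtain ⟨a, ha⟩ := hex (t • b) (by rw [hg, hD])
  rw [mul_smul, ← ha, ← hf, hA, f0]

section

variable {T : ShortComplex (ModuleCat.{u} R)} 

lemma vz_con1 (hT : T.ShortExact) (S : Submonoid R) (Y : ModuleCat.{u} R)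
    (n : ℕ) (h2 : VZ S (Abelian.Ext T.X₂ Y n)) (h3 : VZ S (Abelian.Ext T.X₃ Y (n+1))) :
    VZ S (Abelian.Ext T.X₁ Y n) :=
  VZ.of_exact (fun x : Abelian.Ext T.X₂ Y n => (Ext.mk₀ T.f).comp x (zero_add n))
    (fun x => hT.extClass.comp x (add_comm 1 n)) (by simp) (by simp) (by simp)
    (fun x hx => Ext.contravariant_sequence_exact₁ hT Y x _ hx) h2 h3

lemma vz_con2 (hT : T.ShortExact) (S : Submonoid R) (Y : ModuleCat.{u} R)
    (n : ℕ) (h3 : VZ S (Abelian.Ext T.X₃ Y n)) (h1 : VZ S (Abelian.Ext T.X₁ Y n)) :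
    VZ S (Abelian.Ext T.X₂ Y n) :=
  VZ.of_exact (fun x : Abelian.Ext T.X₃ Y n => (Ext.mk₀ T.g).comp x (zero_add n))
    (fun x => (Ext.mk₀ T.f).comp x (zero_add n)) (by simp) (by simp) (by simp)
    (fun x hx => Ext.contravariant_sequence_exact₂ hT Y x hx) h3 h1

lemma vz_con3 (hT : T.ShortExact) (S : Submonoid R) (Y : ModuleCat.{u} R)
    (n : ℕ) (h1 : VZ S (Abelian.Ext T.X₁ Y n)) (h2 : VZ S (Abelian.Ext T.X₂ Y (n+1))) :
    VZ S (Abelian.Ext T.X₃ Y (n+1)) :=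
  VZ.of_exact (fun x : Abelian.Ext T.X₁ Y n => hT.extClass.comp x (add_comm 1 n))
    (fun x => (Ext.mk₀ T.g).comp x (zero_add (n+1))) (by simp) (by simp) (by simp)
    (fun x hx => Ext.contravariant_sequence_exact₃ hT Y x hx _) h1 h2

lemma vz_cov3 (hT : T.ShortExact) (S : Submonoid R) (Y : ModuleCat.{u} R)
    (n : ℕ) (h2 : VZ S (Abelian.Ext Y T.X₂ n)) (h1 : VZ S (Abelian.Ext Y T.X₁ (n+1))) :
    VZ S (Abelian.Ext Y T.X₃ n) :=
  VZ.of_exact (fun x : Abelian.Ext Y T.X₂ n => x.comp (Ext.mk₀ T.g) (add_zero n))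
    (fun x => x.comp hT.extClass rfl) (by simp) (by simp) (by simp)
    (fun x hx => Ext.covariant_sequence_exact₃ Y hT x _ hx) h2 h1

/-- Lifting homs. -/
lemma lift_hom (hT : T.ShortExact) (Y : ModuleCat.{u} R) (h1 : Subsingleton (Abelian.Ext Y T.X₁ 1)) (φ : Y ⟶ T.X₃) :
    ∃ ψ : Y ⟶ T.X₂, ψ ≫ T.g = φ := by
  obtain ⟨x, hx⟩ := Ext.covariant_sequence_exact₃ Y hT (Ext.mk₀ φ) (zero_add 1)
    (Subsingleton.elim _ _)
  obtain ⟨ψ, rfl⟩ := (Ext.mk₀_bijective Y T.X₂).2 x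
  refine ⟨ψ, (Ext.mk₀_bijective _ _).1 ?_⟩
  rw [← hx, Ext.mk₀_comp_mk₀]

/-- The connecting map applied to homs vanishes iff the hom extends. -/
lemma extend_hom (hT : T.ShortExact) (Y : ModuleCat.{u} R) (φ : T.X₁ ⟶ Y)
    (h : hT.extClass.comp (Ext.mk₀ φ) (add_zero 1) = 0) :
    ∃ ψ : T.X₂ ⟶ Y, T.f ≫ ψ = φ := by
  obtain ⟨x, hx⟩ := Ext.contravariant_sequence_exact₁ hT Y (Ext.mk₀ φ) (add_zero 1) h
  obtain ⟨ψ, rfl⟩ := (Ext.mk₀_bijective T.X₂ Y).2 x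
  refine ⟨ψ, (Ext.mk₀_bijective _ _).1 ?_⟩
  rw [← hx, Ext.mk₀_comp_mk₀]

end

lemma ext_kill_left {r : R} {Y : ModuleCat.{u} R} (h : ∀ y : Y, r • y = 0) (N : ModuleCat.{u} R)
    (n : ℕ) (x : Abelian.Ext Y N n) : r • x = 0 := by
  have h0 : r • 𝟙 Y = 0 := by
    ext y
    exact h y
  have : r • x = (Ext.mk₀ (r • 𝟙 Y)).comp x (zero_add n) := by simp [Ext.mk₀_smul]
  rw [this, h0]
  simp

lemma ext_iso_right {Y N N' : ModuleCat.{u} R} (e : N ≅ N') (n : ℕ)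
    (h : Subsingleton (Abelian.Ext Y N n)) : Subsingleton (Abelian.Ext Y N' n) := by
  refine ⟨fun a b => ?_⟩
  have key : ∀ a : Abelian.Ext Y N' n, a = 0 := by
    intro a
    have h1 : (a.comp (Ext.mk₀ e.inv) (add_zero n)).comp (Ext.mk₀ e.hom) (add_zero n) = a := by
      rw [Ext.comp_assoc_of_third_deg_zero, Ext.mk₀_comp_mk₀, e.inv_hom_id, Ext.comp_mk₀_id]
    rw [← h1, Subsingleton.elim (a.comp (Ext.mk₀ e.inv) (add_zero n)) 0]
    simp
  rw [key a, key b]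

lemma subs_iff (X Y : ModuleCat.{u} R) (n : ℕ) :
    Subsingleton (ExtM R X Y n) ↔ Subsingleton (Abelian.Ext X Y n) :=
  (exists_equiv X Y n).some.toEquiv.subsingleton_congr

/-! ## Regular sequences -/

/-- `x` is regular on `A / J A`. -/
def Reg (A : Type u) [AddCommGroup A] [Module R A] (J : Ideal R) (x : R) : Prop :=
  ∀ a : A, x • a ∈ (J • ⊤ : Submodule R A) → a ∈ (J • ⊤ : Submodule R A)

/-- `J` is generated by a weakly `A`-regular sequence of length `d` in `I`. -/
inductive Tow (A : Type u) [AddCommGroup A] [Module R A] (I : Ideal R) : ℕ → Ideal R → Prop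
  | zero : Tow A I 0 ⊥
  | succ {d : ℕ} {J : Ideal R} {x : R} (h : Tow A I d J) (hx : x ∈ I) (hr : Reg A J x) :
      Tow A I (d+1) (J ⊔ Ideal.span {x})

/-- `A / J A`. -/
abbrev Qt (A : ModuleCat.{u} R) (J : Ideal R) : ModuleCat.{u} R :=
  ModuleCat.of R (A ⧸ (J • ⊤ : Submodule R A))

/-- the projection -/
abbrev qm (A : ModuleCat.{u} R) (J : Ideal R) : A →ₗ[R] Qt A J :=
  (J • ⊤ : Submodule R A).mkQ

lemma mem_sup_smul {A : Type u} [AddCommGroup A] [Module R A] {J : Ideal R} {x : R} {a : A} :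
    a ∈ ((J ⊔ Ideal.span {x}) • ⊤ : Submodule R A) ↔
      ∃ j ∈ (J • ⊤ : Submodule R A), ∃ b : A, a = j + x • b := by
  rw [Submodule.sup_smul, Submodule.mem_sup]
  constructor
  · rintro ⟨j, hj, z, hz, rfl⟩
    rw [Submodule.ideal_span_singleton_smul, Submodule.mem_smul_pointwise_iff_exists] at hz
    obtain ⟨b, -, rfl⟩ := hz
    exact ⟨j, hj, b, rfl⟩
  · rintro ⟨j, hj, b, rfl⟩
    exact ⟨j, hj, x • b, Submodule.smul_mem_smul (Ideal.mem_span_singleton_self x) trivial, rfl⟩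

/-- projection `A/J → A/(J+x)` -/
abbrev qfac (A : ModuleCat.{u} R) (J : Ideal R) (x : R) :
    Qt A J →ₗ[R] Qt A (J ⊔ Ideal.span {x}) :=
  Submodule.factor (Submodule.smul_mono_left le_sup_left)

lemma qfac_qm (A : ModuleCat.{u} R) (J : Ideal R) (x : R) (a : A) :
    qfac A J x (qm A J a) = qm A (J ⊔ Ideal.span {x}) a := rfl

lemma q_inj {A : ModuleCat.{u} R} {J : Ideal R} {x : R} (h : Reg A J x) :
    Function.Injective (x • LinearMap.id : Qt A J →ₗ[R] Qt A J) := by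
  rw [← LinearMap.ker_eq_bot, LinearMap.ker_eq_bot']
  intro m hm
  obtain ⟨a, rfl⟩ := Submodule.mkQ_surjective _ m
  have : qm A J (x • a) = 0 := by simpa using hm
  rw [Submodule.mkQ_apply, Submodule.Quotient.mk_eq_zero] at this ⊢
  exact h a this

lemma q_surj (A : ModuleCat.{u} R) (J : Ideal R) (x : R) : Function.Surjective (qfac A J x) :=
  Submodule.factor_surjective _

lemma q_exact (A : ModuleCat.{u} R) (J : Ideal R) (x : R) :
    LinearMap.ker (qfac A J x) = LinearMap.range (x • LinearMap.id : Qt A J →ₗ[R] Qt A J) := by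
  ext m
  obtain ⟨a, rfl⟩ := Submodule.mkQ_surjective _ m
  rw [LinearMap.mem_ker, qfac_qm, Submodule.mkQ_apply, Submodule.Quotient.mk_eq_zero, mem_sup_smul]
  constructor
  · rintro ⟨j, hj, b, rfl⟩
    refine ⟨qm A J b, ?_⟩
    have : qm A J j = 0 := by rwa [Submodule.mkQ_apply, Submodule.Quotient.mk_eq_zero]
    rw [map_add, this]
    simp
  · rintro ⟨m, hm⟩
    obtain ⟨b, rfl⟩ := Submodule.mkQ_surjective _ m
    refine ⟨a - x • b, ?_, b, by abel⟩
    rw [← Submodule.Quotient.mk_eq_zero, Submodule.Quotient.mk_sub, sub_eq_zero]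
    simpa using hm.symm

/-- `A/⊥A ≅ A` -/
def qbot (A : ModuleCat.{u} R) : Qt A ⊥ ≅ A :=
  (Submodule.quotEquivOfEqBot _ (by simp)).toModuleIso

/-- vanishing of Ext into `A` from vanishing into `A/J`. -/
lemma Tow.ext_up {A : ModuleCat.{u} R} {I : Ideal R} {Y : ModuleCat.{u} R}
    (hY : ∀ r ∈ I, ∀ y : Y, r • y = 0) {d : ℕ} {J : Ideal R} (h : Tow A I d J) :
    ∀ e : ℕ, (∀ t < e, Subsingleton (Abelian.Ext Y (Qt A J) t)) →
      ∀ t < d + e, Subsingleton (Abelian.Ext Y A t) := by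
  induction h with
  | zero => exact fun e he t ht => ext_iso_right (qbot A) t (he t (by omega))
  | @succ d J x h hx hr ih =>
    intro e he t ht
    refine ih (e+1) (fun t ht => ?_) t (by omega)
    have key : ∀ a : Abelian.Ext Y (Qt A J) t, a = 0 := by
      intro a
      have hT := sc_exact (q_inj hr) (q_surj A J x) (q_exact A J x)
      have h0 : a.comp (Ext.mk₀ (sc _ _ (q_exact A J x)).f) (add_zero t) = 0 := by
        have h1 : a.comp (Ext.mk₀ (sc _ _ (q_exact A J x)).f) (add_zero t) = x • a := by
          rw [Ext.smul_eq_comp_mk₀]; rfl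
        rw [h1]
        exact ext_kill_left (hY x hx) _ _ _
      cases t with
      | zero =>
        have := hT.mono_f
        exact Ext.postcomp_mk₀_injective_of_mono Y (sc _ _ (q_exact A J x)).f
          (h0.trans (by simp))
      | succ t =>
        obtain ⟨z, hz⟩ := Ext.covariant_sequence_exact₁ Y hT a h0 rfl
        have := he t (by omega)
        rw [← hz, Subsingleton.elim z 0]
        simp
    exact ⟨fun a b => by rw [key a, key b]⟩

lemma Tow.ext_down {A : ModuleCat.{u} R} {I : Ideal R} {Y : ModuleCat.{u} R}
    {d : ℕ} {J : Ideal R} (h : Tow A I d J) :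
    ∀ e : ℕ, (∀ t < d + e, Subsingleton (Abelian.Ext Y A t)) →
      ∀ t < e, Subsingleton (Abelian.Ext Y (Qt A J) t) := by
  induction h with
  | zero => exact fun e he t ht => ext_iso_right (qbot A).symm t (he t (by omega))
  | @succ d J x h hx hr ih =>
    intro e he t ht
    have hT := sc_exact (q_inj hr) (q_surj A J x) (q_exact A J x)
    have := ih (e+1) (fun t ht => he t (by omega))
    exact (vz_cov3 hT ⊥ Y t (VZ.of_sub _ (this t (by omega)))
      (VZ.of_sub _ (this (t+1) (by omega)))).sub

/-- `P1`: behaviour of modules with vanishing Ext into `C`. -/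
lemma Tow.acyclic {C : ModuleCat.{u} R} {I : Ideal R} {W : ModuleCat.{u} R}
    (hW : ∀ t, 0 < t → Subsingleton (Abelian.Ext W C t)) {d : ℕ} {J : Ideal R}
    (h : Tow C I d J) :
    (∀ t, 0 < t → Subsingleton (Abelian.Ext W (Qt C J) t)) ∧
    (∀ φ : W →ₗ[R] Qt C J, ∃ ψ : W →ₗ[R] C, qm C J ∘ₗ ψ = φ) ∧
    (∀ ψ : W →ₗ[R] C, qm C J ∘ₗ ψ = 0 → ψ ∈ (J • ⊤ : Submodule R (W →ₗ[R] C))) := by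
  induction h with
  | zero =>
    refine ⟨fun t ht => ext_iso_right (qbot C).symm t (hW t ht), fun φ => ?_, fun ψ hψ => ?_⟩
    · refine ⟨(qbot C).hom.hom ∘ₗ φ, ?_⟩
      ext w
      obtain ⟨c, hc⟩ := Submodule.mkQ_surjective _ (φ w)
      simp only [LinearMap.comp_apply]
      rw [← hc]
      rfl
    · have : ψ = 0 := by
        ext w
        have := LinearMap.congr_fun hψ w
        simpa using this
      rw [this]
      exact Submodule.zero_mem _
  | @succ d J x h hx hr ih =>
    obtain ⟨h1, h2, h3⟩ := ih
    have hT := sc_exact (q_inj hr) (q_surj C J x) (q_exact C J x)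
    refine ⟨fun t ht => ?_, fun φ => ?_, fun ψ hψ => ?_⟩
    · exact (vz_cov3 hT ⊥ W t (VZ.of_sub _ (h1 t ht)) (VZ.of_sub _ (h1 (t+1) (by omega)))).sub
    · obtain ⟨χ, hχ⟩ := lift_hom hT W (h1 1 one_pos) (ModuleCat.ofHom φ)
      obtain ⟨ψ, hψ⟩ := h2 χ.hom
      refine ⟨ψ, ?_⟩
      have : qfac C J x ∘ₗ χ.hom = φ := congrArg ModuleCat.Hom.hom hχ
      rw [← this, ← hψ]
      rfl
    · have hker : ∀ w, ∃ m : Qt C J, x • m = qm C J (ψ w) := by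
        intro w
        have : qm C J (ψ w) ∈ LinearMap.ker (qfac C J x) := LinearMap.congr_fun hψ w
        rw [q_exact] at this
        obtain ⟨m, hm⟩ := this
        exact ⟨m, by simpa using hm⟩
      choose θ hθ using hker
      have inj : ∀ a b : Qt C J, x • a = x • b → a = b := fun a b hab => q_inj hr (by simpa using hab)
      let Θ : W →ₗ[R] Qt C J :=
        { toFun := θ
          map_add' := fun a b => inj _ _ (by rw [smul_add, hθ, hθ, hθ, map_add, map_add])
          map_smul' := fun r a => inj _ _ (by
            rw [RingHom.id_apply, smul_comm, hθ, hθ, map_smul, map_smul]) }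
      obtain ⟨η, hη⟩ := h2 Θ
      have h4 := h3 (ψ - x • η) (by
        ext w
        have := LinearMap.congr_fun hη w
        have h5 : qm C J (η w) = θ w := this
        change qm C J (ψ w - x • η w) = 0
        rw [map_sub, map_smul, h5, hθ, sub_self])
      exact mem_sup_smul.2 ⟨_, h4, η, by abel⟩

lemma qm_comp_eq_zero {C W : ModuleCat.{u} R} {J : Ideal R} {ψ : W →ₗ[R] C}
    (h : ψ ∈ (J • ⊤ : Submodule R (W →ₗ[R] C))) : qm C J ∘ₗ ψ = 0 := by
  refine Submodule.smul_induction_on h (fun r hr n _ => ?_) (fun a b ha hb => ?_)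
  · ext w
    change qm C J (r • n w) = 0
    rw [Submodule.mkQ_apply, Submodule.Quotient.mk_eq_zero]
    exact Submodule.smul_mem_smul hr trivial
  · rw [LinearMap.comp_add, ha, hb, add_zero]

lemma Tow.reg_hom {C : ModuleCat.{u} R} {I : Ideal R} {W : ModuleCat.{u} R}
    (hW : ∀ t, 0 < t → Subsingleton (Abelian.Ext W C t)) {d : ℕ} {J : Ideal R}
    (h : Tow C I d J) {x : R} (hx : Reg C J x) : Reg (W →ₗ[R] C) J x := by
  intro y hy
  refine (h.acyclic hW).2.2 y ?_
  ext w
  have := LinearMap.congr_fun (qm_comp_eq_zero hy) w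
  have h1 : x • y w ∈ (J • ⊤ : Submodule R C) := by
    rw [← Submodule.Quotient.mk_eq_zero]; exact this
  exact (Submodule.Quotient.mk_eq_zero _).2 (hx _ h1)

lemma mem_smul_map {A B : Type u} [AddCommGroup A] [Module R A] [AddCommGroup B] [Module R B]
    (f : A →ₗ[R] B) {J : Ideal R} {a : A} (h : a ∈ (J • ⊤ : Submodule R A)) :
    f a ∈ (J • ⊤ : Submodule R B) := by
  have : f a ∈ (J • ⊤ : Submodule R A).map f := ⟨a, h, rfl⟩
  rw [Submodule.map_smul''] at this
  exact Submodule.smul_mono le_rfl le_top this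

lemma mem_smul_equiv {A B : Type u} [AddCommGroup A] [Module R A] [AddCommGroup B] [Module R B]
    (f : A ≃ₗ[R] B) {J : Ideal R} {a : A} (h : f a ∈ (J • ⊤ : Submodule R B)) :
    a ∈ (J • ⊤ : Submodule R A) := by
  simpa using mem_smul_map f.symm.toLinearMap h

lemma Reg.of_equiv {A B : Type u} [AddCommGroup A] [Module R A] [AddCommGroup B] [Module R B]
    (f : A ≃ₗ[R] B) {J : Ideal R} {x : R} (h : Reg B J x) : Reg A J x := by
  intro a ha
  refine mem_smul_equiv f (h _ ?_)
  simpa using mem_smul_map f.toLinearMap ha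

lemma Reg.of_projective {P : Type u} [AddCommGroup P] [Module R P] [Module.Projective R P]
    {J : Ideal R} {x : R} (h : Reg R J x) : Reg P J x := by
  intro y hy
  obtain ⟨s, hs⟩ := Module.projective_def'.1 ‹Module.Projective R P›
  have key : ∀ l : P →ₗ[R] R, l y ∈ J := by
    intro l
    have := mem_smul_map l hy
    rw [map_smul] at this
    simpa using h _ this
  have hy' : y = Finsupp.linearCombination R id (s y) := (LinearMap.congr_fun hs y).symm
  rw [hy', Finsupp.linearCombination_apply]
  refine Submodule.sum_mem _ fun i _ => ?_
  exact Submodule.smul_mem_smul (key (Finsupp.lapply i ∘ₗ s)) trivial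

end Aux17

/-! ## The main argument -/

namespace Aux17

open CategoryTheory Abelian

variable {R}

/-- The module `Hom(M, C)`. -/
abbrev Dl (C M : ModuleCat.{u} R) : ModuleCat.{u} R := ModuleCat.of R (↥M →ₗ[R] ↥C)

lemma TR.ext1 {C X : ModuleCat.{u} R} (h : IsTotallyCReflexive R C X) (t : ℕ) (ht : 0 < t) :
    Subsingleton (Abelian.Ext X C t) := (subs_iff _ _ _).1 (h.2.2.1 t ht)

lemma TR.ext2 {C X : ModuleCat.{u} R} (h : IsTotallyCReflexive R C X) (t : ℕ) (ht : 0 < t) :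
    Subsingleton (Abelian.Ext (Dl C X) C t) := (subs_iff _ _ _).1 (h.2.2.2 t ht)

/-- biduality equivalence -/
def TR.equiv {C X : ModuleCat.{u} R} (h : IsTotallyCReflexive R C X) :
    X ≃ₗ[R] (Dl C X →ₗ[R] C) := LinearEquiv.ofBijective (bidualityMap R C X) h.2.1

/-- Elements regular on `C/JC` are regular on `X/JX`. -/
def Good (C X : ModuleCat.{u} R) : Prop :=
  ∀ (I : Ideal R) (d : ℕ) (J : Ideal R) (x : R), Tow C I d J → Reg C J x → Reg X J x

lemma TR.good {C X : ModuleCat.{u} R} (h : IsTotallyCReflexive R C X) : Good C X :=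
  fun _ _ _ _ hJ hx => Reg.of_equiv (TR.equiv h) (hJ.reg_hom (TR.ext2 h) hx)

lemma good_R {C : ModuleCat.{u} R} (hC : IsSemidualizing R C) : Good C (ModuleCat.of R R) := by
  intro I d J x hJ hx
  have e : R ≃ₗ[R] (C →ₗ[R] C) :=
    LinearEquiv.ofBijective (LinearMap.toSpanSingleton R (C →ₗ[R] C) LinearMap.id) hC.2.1
  exact Reg.of_equiv e (hJ.reg_hom (fun t ht => (subs_iff _ _ _).1 (hC.2.2 t ht)) hx)

lemma good_projective {C : ModuleCat.{u} R} (hC : IsSemidualizing R C) (P : ModuleCat.{u} R)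
    (hP : Module.Projective R P) : Good C P :=
  fun I d J x hJ hx => Reg.of_projective (good_R hC I d J x hJ hx)

lemma Tow.to_R {C : ModuleCat.{u} R} (hC : IsSemidualizing R C) {I : Ideal R} {d : ℕ}
    {J : Ideal R} (h : Tow C I d J) : Tow (ModuleCat.of R R) I d J := by
  induction h with
  | zero => exact Tow.zero
  | succ h hx hr ih => exact Tow.succ ih hx (good_R hC _ _ _ _ h hr)

/-- `K` is an `i`-th syzygy through good modules. -/
def Syz (C : ModuleCat.{u} R) : ℕ → ModuleCat.{u} R → Prop
  | 0, _ => True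
  | i+1, K => ∃ (X L : ModuleCat.{u} R) (f : ↥K →ₗ[R] ↥X) (g : ↥X →ₗ[R] ↥L),
      Function.Injective f ∧ Function.Surjective g ∧
      LinearMap.ker g = LinearMap.range f ∧ Good C X ∧ Syz C i L

lemma Tow.inj {C : ModuleCat.{u} R} {I : Ideal R} {d : ℕ} {J : Ideal R} (h : Tow C I d J) :
    ∀ (i : ℕ) (K X L : ModuleCat.{u} R) (f : ↥K →ₗ[R] ↥X) (g : ↥X →ₗ[R] ↥L),
      d ≤ i → Function.Injective f → Function.Surjective g →
      LinearMap.ker g = LinearMap.range f → Syz C i L →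
      ∀ k : K, f k ∈ (J • ⊤ : Submodule R X) → k ∈ (J • ⊤ : Submodule R K) := by
  induction h with
  | zero =>
    intro i K X L f g _ hf _ _ _ k hk
    have : f k = 0 := by simpa using hk
    rw [(map_eq_zero_iff f hf).1 this]
    exact Submodule.zero_mem _
  | @succ d J x h hx hr ih =>
    intro i K X L f g hd hf hg he hL k hk
    obtain ⟨i, rfl⟩ : ∃ j, i = j + 1 := ⟨i - 1, by omega⟩
    obtain ⟨X', L', f', g', hf', hg', he', hX', hL'⟩ := id hL
    obtain ⟨j, hj, y, hy⟩ := mem_sup_smul.1 hk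
    have hgf : ∀ k, g (f k) = 0 := fun k => by
      have : f k ∈ LinearMap.ker g := he ▸ ⟨k, rfl⟩
      exact this
    have h1 : x • g y ∈ (J • ⊤ : Submodule R L) := by
      have h2 : g j + x • g y = 0 := by rw [← map_smul, ← map_add, ← hy, hgf]
      rw [eq_neg_of_add_eq_zero_right h2]
      exact Submodule.neg_mem _ (mem_smul_map g hj)
    have h2 : f' (g y) ∈ (J • ⊤ : Submodule R X') := by
      apply hX' I d J x h hr
      rw [← map_smul]
      exact mem_smul_map f' h1
    have h3 := ih i L X' L' f' g' (by omega) hf' hg' he' hL' _ h2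
    have h4 : g y ∈ (J • ⊤ : Submodule R X).map g := by
      rw [Submodule.map_smul'', Submodule.map_top, LinearMap.range_eq_top.2 hg]
      exact h3
    obtain ⟨j', hj', hj'y⟩ := h4
    have h5 : y - j' ∈ LinearMap.ker g := by rw [LinearMap.mem_ker, map_sub, hj'y, sub_self]
    rw [he] at h5
    obtain ⟨k', hk'⟩ := h5
    have h6 : k - x • k' ∈ (J • ⊤ : Submodule R K) := by
      refine ih (i+1) K X L f g (by omega) hf hg he hL _ ?_
      have : f (k - x • k') = j + x • j' := by
        rw [map_sub, map_smul, hk', hy, smul_sub]; abel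
      rw [this]
      exact Submodule.add_mem _ hj (Submodule.smul_mem _ _ hj')
    exact mem_sup_smul.2 ⟨_, h6, k', by abel⟩

/-- The connecting map `Hom(K,Y) → Ext¹(N,Y)`. -/
def conn {T : ShortComplex (ModuleCat.{u} R)} (hT : T.ShortExact) (Y : ModuleCat.{u} R) :
    (T.X₁ →ₗ[R] Y) →ₗ[R] Abelian.Ext T.X₃ Y 1 where
  toFun φ := hT.extClass.comp (Ext.mk₀ (ModuleCat.ofHom φ)) (add_zero 1)
  map_add' a b := by
    rw [ModuleCat.ofHom_add, Ext.mk₀_add, Ext.comp_add]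
  map_smul' r a := by
    have : ModuleCat.ofHom (r • a) = r • ModuleCat.ofHom a := rfl
    rw [this, Ext.mk₀_smul, Ext.comp_smul]
    rfl

lemma conn_surj {T : ShortComplex (ModuleCat.{u} R)} (hT : T.ShortExact) (Y : ModuleCat.{u} R)
    (h : Subsingleton (Abelian.Ext T.X₂ Y 1)) : Function.Surjective (conn hT Y) := by
  intro z
  obtain ⟨x, hx⟩ := Ext.contravariant_sequence_exact₃ hT Y z (Subsingleton.elim _ _) (add_zero 1)
  obtain ⟨ψ, rfl⟩ := (Ext.mk₀_bijective _ _).2 x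
  exact ⟨ψ.hom, hx⟩

lemma conn_comp {T : ShortComplex (ModuleCat.{u} R)} (hT : T.ShortExact) (Y : ModuleCat.{u} R)
    (χ : T.X₂ →ₗ[R] Y) : conn hT Y (χ ∘ₗ T.f.hom) = 0 := by
  change hT.extClass.comp (Ext.mk₀ (T.f ≫ ModuleCat.ofHom χ)) (add_zero 1) = 0
  rw [← Ext.mk₀_comp_mk₀, hT.extClass_comp_assoc]

lemma conn_eq_zero {T : ShortComplex (ModuleCat.{u} R)} (hT : T.ShortExact) (Y : ModuleCat.{u} R)
    (φ : T.X₁ →ₗ[R] Y) (h : conn hT Y φ = 0) : ∃ χ : T.X₂ →ₗ[R] Y, χ ∘ₗ T.f.hom = φ := by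
  obtain ⟨ψ, hψ⟩ := extend_hom hT Y (ModuleCat.ofHom φ) h
  exact ⟨ψ.hom, congrArg ModuleCat.Hom.hom hψ⟩

/-- Main local duality statement. -/
lemma local_dual {C : ModuleCat.{u} R} (S : Submonoid R) {I : Ideal R} {d : ℕ} {J : Ideal R}
    (hJ : Tow C I d J) : ∀ (n : ℕ) (K : ModuleCat.{u} R), gcdimLE R C n K →
    (∀ t, 0 < t → VZ S (Abelian.Ext K C t)) →
    (∀ t, 0 < t → VZ S (Abelian.Ext (Dl C K) (Qt C J) t)) ∧
    (∀ φ : Dl C K →ₗ[R] Qt C J, ∃ s ∈ S, ∃ k : K, s • φ = qm C J ∘ₗ bidualityMap R C K k) := by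
  have base : ∀ K : ModuleCat.{u} R, IsTotallyCReflexive R C K →
      (∀ t, 0 < t → Subsingleton (Abelian.Ext (Dl C K) (Qt C J) t)) ∧
      (∀ φ : Dl C K →ₗ[R] Qt C J, ∃ k : K, φ = qm C J ∘ₗ bidualityMap R C K k) := by
    intro K hK
    obtain ⟨h1, h2, -⟩ := hJ.acyclic (TR.ext2 hK)
    refine ⟨h1, fun φ => ?_⟩
    obtain ⟨ψ, hψ⟩ := h2 φ
    obtain ⟨k, hk⟩ := hK.2.1.2 ψ
    exact ⟨k, by rw [hk, hψ]⟩
  intro n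
  induction n with
  | zero =>
    intro K hK _
    obtain ⟨h1, h2⟩ := base K hK
    refine ⟨fun t ht => VZ.of_sub _ (h1 t ht), fun φ => ?_⟩
    obtain ⟨k, hk⟩ := h2 φ
    exact ⟨1, S.one_mem, k, by rw [one_smul, hk]⟩
  | succ n ih =>
    rintro K ⟨X, K', f, g, hf, hg, he, hX, hK'⟩ hK
    have hT := sc_exact hf hg he
    obtain ⟨b1, b2⟩ := base X hX
    obtain ⟨i1, -⟩ := ih K' hK' (fun t ht =>
      vz_con1 hT S C t (VZ.of_sub _ (TR.ext1 hX t ht)) (hK (t+1) (by omega)))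
    -- the dual sequences
    let fs : Dl C X →ₗ[R] Dl C K' := LinearMap.lcomp R C f
    let gs : Dl C K →ₗ[R] Dl C X := LinearMap.lcomp R C g
    let W : ModuleCat.{u} R := ModuleCat.of R (LinearMap.range fs)
    let Q : ModuleCat.{u} R := ModuleCat.of R (Dl C K' ⧸ LinearMap.range fs)
    have hQ : VZ S Q := by
      obtain ⟨s, hs, h⟩ := hK 1 one_pos
      refine ⟨s, hs, fun q => ?_⟩
      obtain ⟨ψ, rfl⟩ := Submodule.mkQ_surjective _ q
      rw [← map_smul, Submodule.mkQ_apply, Submodule.Quotient.mk_eq_zero]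
      obtain ⟨χ, hχ⟩ := conn_eq_zero hT C (s • ψ) (by rw [map_smul]; exact h _)
      exact ⟨χ, hχ⟩
    have hQext : ∀ t, VZ S (Abelian.Ext Q (Qt C J) t) := by
      obtain ⟨s, hs, h⟩ := hQ
      exact fun t => ⟨s, hs, ext_kill_left h _ t⟩
    have hT1 : (sc (K := W) (X := Dl C K') (N := Q) (LinearMap.range fs).subtype
        (LinearMap.range fs).mkQ
        ((Submodule.ker_mkQ _).trans (Submodule.range_subtype _).symm)).ShortExact :=
      sc_exact (Submodule.injective_subtype _) (Submodule.mkQ_surjective _) _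
    have hW : ∀ t, 0 < t → VZ S (Abelian.Ext W (Qt C J) t) := fun t ht =>
      vz_con1 hT1 S _ t (i1 t ht) (hQext (t+1))
    have hT2 : (sc (K := Dl C K) (X := Dl C X) (N := W) gs fs.rangeRestrict (by
        rw [LinearMap.ker_rangeRestrict]
        ext χ
        constructor
        · intro hχ
          have hle : LinearMap.ker g ≤ LinearMap.ker χ := by
            rw [he]
            rintro _ ⟨k, rfl⟩
            exact LinearMap.congr_fun hχ k
          refine ⟨(LinearMap.ker g).liftQ χ hle ∘ₗ
            (g.quotKerEquivOfSurjective hg).symm.toLinearMap, ?_⟩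
          ext a
          change (LinearMap.ker g).liftQ χ hle ((g.quotKerEquivOfSurjective hg).symm (g a)) = χ a
          have : (g.quotKerEquivOfSurjective hg).symm (g a) = (LinearMap.ker g).mkQ a := by
            rw [LinearEquiv.symm_apply_eq]; rfl
          rw [this]
          rfl
        · rintro ⟨ψ, rfl⟩
          ext k
          have : f k ∈ LinearMap.ker g := he ▸ ⟨k, rfl⟩
          change ψ (g (f k)) = 0
          rw [LinearMap.mem_ker.1 this, map_zero])).ShortExact :=
      sc_exact (fun a b hab => by
        ext z
        obtain ⟨y, rfl⟩ := hg z
        exact LinearMap.congr_fun hab y) (LinearMap.surjective_rangeRestrict _) _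
    refine ⟨fun t ht => vz_con1 hT2 S _ t (VZ.of_sub _ (b1 t ht)) (hW (t+1) (by omega)),
      fun φ => ?_⟩
    obtain ⟨s, hs, h⟩ := hW 1 one_pos
    obtain ⟨χ, hχ⟩ := conn_eq_zero hT2 (Qt C J) (s • φ) (by rw [map_smul]; exact h _)
    obtain ⟨a, ha⟩ := b2 χ
    refine ⟨s, hs, g a, ?_⟩
    rw [← hχ, ha]
    rfl

lemma gcdimLE.finite {C : ModuleCat.{u} R} : ∀ (n : ℕ) (M : ModuleCat.{u} R), gcdimLE R C n M →
    Module.Finite R M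
  | 0, _, h => h.1
  | _+1, _, ⟨_, _, _, g, _, hg, _, hX, _⟩ =>
    have := hX.1
    Module.Finite.of_surjective g hg

lemma core [IsNoetherianRing R] {C : ModuleCat.{u} R} (hC : Module.Finite R C)
    {n i : ℕ} {K X N : ModuleCat.{u} R} {f : ↥K →ₗ[R] ↥X} {g : ↥X →ₗ[R] ↥N}
    (hf : Function.Injective f) (hg : Function.Surjective g)
    (he : LinearMap.ker g = LinearMap.range f) (hX : IsTotallyCReflexive R C X)
    (hK : gcdimLE R C n K) (hN : Syz C i N)
    (ih : ∀ t, 0 < t → ∃ J, Tow C (Module.annihilator R (Abelian.Ext K C t)) (t + i + 1) J) :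
    ∀ d ≤ i + 1, ∃ J, Tow C (Module.annihilator R (Abelian.Ext N C 1)) d J := by
  intro d
  induction d with
  | zero => exact fun _ => ⟨_, Tow.zero⟩
  | succ d ihd =>
    intro hd
    obtain ⟨J, hJ⟩ := ihd (by omega)
    have : Module.Finite R X := hX.1
    have : Module.Finite R N := Module.Finite.of_surjective g hg
    have hT := sc_exact hf hg he
    suffices hs : Subsingleton (Abelian.Ext N C 1 →ₗ[R] Qt C J) by
      obtain ⟨x, hx, hr⟩ := IsSMulRegular.subsingleton_linearMap_iff.1 hs
      refine ⟨_, Tow.succ hJ hx fun a ha => ?_⟩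
      rw [← Submodule.Quotient.mk_eq_zero] at ha ⊢
      exact hr (ha.trans (smul_zero x).symm)
    by_contra hs
    have : ∃ φ : Abelian.Ext N C 1 →ₗ[R] Qt C J, φ ≠ 0 := by
      by_contra! h
      exact hs ⟨fun a b => by rw [h a, h b]⟩
    obtain ⟨φ, hφ⟩ := this
    -- choose an associated prime
    have : Nontrivial (LinearMap.range φ) := by
      rw [Submodule.nontrivial_iff_ne_bot]
      exact fun h => hφ (LinearMap.range_eq_bot.1 h)
    obtain ⟨m0, hm0⟩ := exists_ne (0 : LinearMap.range φ)
    obtain ⟨p, hp, -⟩ := exists_le_isAssociatedPrime_of_isNoetherianRing R m0 hm0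
    obtain ⟨hp, m, hm⟩ := Submodule.isAssociatedPrime_iff.1 hp
    have hpm : ∀ r, r ∈ p ↔ r • m = 0 := by
      intro r
      rw [hm]
      simp
    have hVZ : ∀ t, 0 < t → VZ p.primeCompl (Abelian.Ext K C t) := by
      intro t ht
      by_contra hno
      have hle : Module.annihilator R (Abelian.Ext K C t) ≤ p := by
        intro r hr
        by_contra hrp
        exact hno ⟨r, hrp, fun v => Module.mem_annihilator.1 hr v⟩
      obtain ⟨J', hJ'⟩ := ih t ht
      let Y : ModuleCat.{u} R := ModuleCat.of R (Submodule.span R {m.1})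
      have hY : ∀ r ∈ Module.annihilator R (Abelian.Ext K C t), ∀ y : Y, r • y = 0 := by
        rintro r hr ⟨y, hy⟩
        obtain ⟨c, rfl⟩ := Submodule.mem_span_singleton.1 hy
        apply Subtype.ext
        change r • c • m.1 = 0
        rw [smul_comm]
        have := congrArg Subtype.val ((hpm r).1 (hle hr))
        have h2 : r • m.1 = 0 := this
        rw [h2, smul_zero]
      have h1 := hJ'.ext_up hY 0 (by simp)
      have h2 := hJ.ext_down (Y := Y) 1 (fun t' ht' => h1 t' (by omega)) 0 one_pos
      let ι : Y ⟶ Qt C J := ModuleCat.ofHom (Submodule.span R {m.1}).subtype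
      have h3 : ι = 0 := (Ext.mk₀_bijective _ _).1 (Subsingleton.elim _ _)
      have h4 : m.1 = 0 := by
        have := LinearMap.congr_fun (congrArg ModuleCat.Hom.hom h3)
          ⟨m.1, Submodule.mem_span_singleton_self _⟩
        exact this
      apply hp.ne_top
      rw [Ideal.eq_top_iff_one, hpm]
      apply Subtype.ext
      simp [h4]
    obtain ⟨-, hb⟩ := local_dual p.primeCompl hJ n K hK hVZ
    obtain ⟨s, hs, k, hk⟩ := hb (φ ∘ₗ conn hT C)
    have h1 : qm C J ∘ₗ bidualityMap R C X (f k) = 0 := by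
      ext χ
      have h2 := LinearMap.congr_fun hk (χ ∘ₗ f)
      change s • φ (conn hT C (χ ∘ₗ f)) = qm C J (χ (f k)) at h2
      have h3 : conn hT C (χ ∘ₗ f) = 0 := conn_comp hT C χ
      rw [h3, map_zero, smul_zero] at h2
      exact h2.symm
    have h2 : f k ∈ (J • ⊤ : Submodule R X) :=
      mem_smul_equiv (TR.equiv hX) ((hJ.acyclic (TR.ext2 hX)).2.2 _ h1)
    have h3 := hJ.inj i K X N f g (by omega) hf hg he hN k h2
    have h4 := qm_comp_eq_zero (W := Dl C K) (mem_smul_map (bidualityMap R C K) h3)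
    rw [h4] at hk
    obtain ⟨e, he'⟩ := m.2
    obtain ⟨ψ, rfl⟩ := conn_surj hT C (TR.ext1 hX 1 one_pos) e
    apply hs
    refine (hpm s).2 ?_
    apply Subtype.ext
    change s • m.1 = 0
    rw [← he']
    exact LinearMap.congr_fun hk ψ

lemma ann_le {A B : Type u} [AddCommGroup A] [Module R A] [AddCommGroup B] [Module R B]
    (f : A →ₗ[R] B) (hf : Function.Surjective f) :
    Module.annihilator R A ≤ Module.annihilator R B := by
  intro r hr
  rw [Module.mem_annihilator] at hr ⊢
  intro b
  obtain ⟨a, rfl⟩ := hf b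
  rw [← map_smul, hr, map_zero]

lemma Tow.mono {A : Type u} [AddCommGroup A] [Module R A] {I I' : Ideal R} (hI : I ≤ I') {d : ℕ}
    {J : Ideal R} (h : Tow A I d J) : Tow A I' d J := by
  induction h with
  | zero => exact Tow.zero
  | succ h hx hr ih => exact Tow.succ ih (hI hx) hr

lemma tow_of_top {A : Type u} [AddCommGroup A] [Module R A] {I : Ideal R} (hI : I = ⊤) :
    ∀ d : ℕ, ∃ J, Tow A I d J
  | 0 => ⟨_, Tow.zero⟩
  | d+1 => by
    obtain ⟨J, hJ⟩ := tow_of_top (A := A) hI d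
    have h1 : (1:R) ∈ I := by rw [hI]; trivial
    have hr : Reg A J (1:R) := fun a ha => by simpa using ha
    exact ⟨_, Tow.succ hJ h1 hr⟩

lemma main [IsNoetherianRing R] {C : ModuleCat.{u} R} (hC : Module.Finite R C) :
    ∀ (n : ℕ) (N : ModuleCat.{u} R) (i : ℕ), gcdimLE R C n N → Syz C i N → ∀ t, 0 < t →
      ∃ J, Tow C (Module.annihilator R (Abelian.Ext N C t)) (t + i) J := by
  intro n
  induction n with
  | zero =>
    intro N i hN _ t ht
    have := TR.ext1 hN t ht
    exact tow_of_top (Module.annihilator_eq_top_iff.2 this) _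
  | succ n ih =>
    rintro N i ⟨X, K, f, g, hf, hg, he, hX, hK⟩ hS t ht
    have ihK := ih K (i+1) hK ⟨X, N, f, g, hf, hg, he, TR.good hX, hS⟩
    have hT := sc_exact hf hg he
    obtain ⟨t, rfl⟩ : ∃ t', t = t' + 1 := ⟨t - 1, by omega⟩
    rcases Nat.eq_zero_or_pos t with rfl | ht'
    · obtain ⟨J, hJ⟩ := core hC hf hg he hX hK hS (fun t ht => ihK t ht) (i+1) le_rfl
      exact ⟨J, by rw [zero_add, add_comm 1 i]; exact hJ⟩
    · obtain ⟨J, hJ⟩ := ihK t ht'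
      refine ⟨J, ?_⟩
      rw [show t + 1 + i = t + (i + 1) by omega]
      refine hJ.mono (ann_le (hT.extClass.precompOfLinear R C (add_comm 1 t)) ?_)
      intro z
      have := TR.ext1 hX (t+1) (by omega)
      exact Ext.contravariant_sequence_exact₃ hT C z (Subsingleton.elim _ _) (add_comm 1 t)

end Aux17

/-- if `M` is horizontally linked of finite `G_C`-dimension, then
`grade_R(Ext_R^i(M,C)) ≥ i + 1` for every `i > 0`. -/
theorem statement17 [IsNoetherianRing R] (hsp : IsSemiperfectRing R)
    (C : ModuleCat.{u} R) (hC : IsSemidualizing R C)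
    (M : ModuleCat.{u} R) (hMfin : Module.Finite R ↥M)
    (hlink : IsHorizontallyLinked R M) (hfin : gcdim R C M ≠ ⊤) :
    ∀ i : ℕ, 0 < i → (i : ℕ∞) + 1 ≤ gradeR R (ExtM R M C i) := by
  intro i hi
  have hn : ∃ n, gcdimLE R C n M := by
    by_contra! h
    apply hfin
    have : {n | gcdimLE R C n M} = ∅ := Set.eq_empty_of_forall_notMem h
    rw [gcdim, this]
    simp
  obtain ⟨n, hn⟩ := hn
  obtain ⟨L, L2, -, ⟨T, -, P, π, -, ⟨hP, hπ, -⟩, ⟨e⟩⟩, ⟨e'⟩⟩ := hlink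
  have hS : Aux17.Syz C 1 M := by
    refine ⟨P, T, (LinearMap.ker π).subtype ∘ₗ (e' ≪≫ₗ e).toLinearMap, π, ?_, hπ, ?_,
      Aux17.good_projective hC P hP, trivial⟩
    · exact (Submodule.injective_subtype _).comp (e' ≪≫ₗ e).injective
    · rw [LinearMap.range_comp, LinearEquiv.range, Submodule.map_top, Submodule.range_subtype]
  obtain ⟨J, hJ⟩ := Aux17.main hC.1 n M 1 hn hS i hi
  have hJR := hJ.to_R hC
  obtain ⟨eq⟩ := Aux17.exists_equiv M C i
  have hvan := hJR.ext_up (Y := ExtM R M C i) (fun r hr y => by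
    apply eq.injective
    rw [map_smul, map_zero]
    exact Module.mem_annihilator.1 hr _) 0 (by simp)
  refine le_sInf ?_
  rintro _ ⟨j, hj, rfl⟩
  by_contra hlt
  push Not at hlt
  have hlt' : j < i + 1 := by exact_mod_cast hlt
  exact hj ((Aux17.subs_iff _ _ _).2 (hvan j (by omega)))

end
end
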